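/- arXiv:1909.07762 — 2 statements merged into one kernel-verified Lean document; each statement's English description precedes it below -/
import Mathlib

section
/- Let c = 2π√(5/12). There exists a constant C > 0 such that for all positive integers k, n with k ≤ n, D(k,n) ≤ C · k^{−2} · e^{c√k}, where D(k,n) := π(k,n) − π(k−1,n). -/
open Finset

/-- A pair of sequences of parts is *steadily decreasing* if
`min (a i) (b i) ≥ max (a (i+1)) (b (i+1))` for all `i`. -/
noncomputable def SteadilyDecreasing (a b : ℕ → ℕ) : Prop :=
  ∀ i, max (a (i + 1)) (b (i + 1)) ≤ min (a i) (b i)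

/-- `bipartitePi m n` is the number of pairs of partitions (given as non-increasing,
finitely supported sequences) of the bipartite number `(m, n)` with steadily
decreasing parts. -/
noncomputable def bipartitePi (m n : ℕ) : ℕ :=
  Nat.card {p : (ℕ →₀ ℕ) × (ℕ →₀ ℕ) //
    (∀ i, p.1 (i + 1) ≤ p.1 i) ∧ (∀ i, p.2 (i + 1) ≤ p.2 i) ∧
    SteadilyDecreasing p.1 p.2 ∧
    (p.1.sum fun _ x => x) = m ∧ (p.2.sum fun _ x => x) = n}

/-- The partition function `p n`. -/
noncomputable def partitionCount (n : ℕ) : ℕ := Nat.card (Nat.Partition n)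

/-- The partition function extended to the integers, with `p r = 0` for `r < 0`. -/
noncomputable def partitionCountInt (r : ℤ) : ℕ := if 0 ≤ r then partitionCount r.toNat else 0

/-- The cubic partition function `c n`, counting partitions of `n` in which even
parts come in two colors (equivalently, pairs of a partition together with a
partition into even parts, of total size `n`). -/
noncomputable def cubicPartition (n : ℕ) : ℕ :=
  Nat.card {p : Multiset ℕ × Multiset ℕ //
    (∀ i ∈ p.1, 0 < i) ∧ (∀ i ∈ p.2, 0 < i ∧ Even i) ∧ p.1.sum + p.2.sum = n}

/-- The Andrews–Garvan crank of a partition: the largest part if there are no ones,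
and otherwise the number of parts larger than the number of ones minus the number of
ones. -/
noncomputable def crank {n : ℕ} (l : n.Partition) : ℤ :=
  if l.parts.count 1 = 0 then (l.parts.sup : ℤ)
  else ((l.parts.filter fun p => l.parts.count 1 < p).card : ℤ) - l.parts.count 1

/-- `crankM m n` is the crank counting function `M(m, n)`: the number of partitions
of `n` with crank `m`, with the standard convention at `n = 1`
(`M(0,1) = -1`, `M(±1,1) = 1`, `M(m,1) = 0` otherwise). -/
noncomputable def crankM (m : ℤ) (n : ℕ) : ℤ :=
  if n = 1 then (if m = 0 then -1 else if m.natAbs = 1 then 1 else 0)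
  else (Nat.card {l : n.Partition // crank l = m} : ℤ)

/-- `alphaBip s k = Σ_{ℓ ≥ 0} (-1)^ℓ p(k - ℓ(ℓ+1)/2 - ℓ s)`. -/
noncomputable def alphaBip (s k : ℕ) : ℤ :=
  ∑' ℓ : ℕ, (-1 : ℤ) ^ ℓ *
    (partitionCountInt ((k : ℤ) - ℓ * (ℓ + 1) / 2 - ℓ * s) : ℤ)

/-- `Dbip m n = π(m,n) - π(m-1,n)`, with `π(-1,n) := 0`. -/
noncomputable def Dbip (m n : ℕ) : ℤ :=
  (bipartitePi m n : ℤ) - if m = 0 then 0 else (bipartitePi (m - 1) n : ℤ)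

def bipSet (m n : ℕ) : Set ((ℕ →₀ ℕ) × (ℕ →₀ ℕ)) :=
  {p | (∀ i, p.1 (i + 1) ≤ p.1 i) ∧ (∀ i, p.2 (i + 1) ≤ p.2 i) ∧
    SteadilyDecreasing p.1 p.2 ∧
    (p.1.sum fun _ x => x) = m ∧ (p.2.sum fun _ x => x) = n}

lemma bipartitePi_eq (m n : ℕ) : bipartitePi m n = (bipSet m n).ncard := by
  rw [← Nat.card_coe_set_eq]; rfl

lemma fsum_range (a : ℕ →₀ ℕ) (L : ℕ) (h : ∀ i, L ≤ i → a i = 0) :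
    (a.sum fun _ x => x) = ∑ i ∈ range L, a i := by
  rw [Finsupp.sum]
  apply Finset.sum_subset
  · intro i hi
    rw [Finsupp.mem_support_iff] at hi
    rw [Finset.mem_range]
    by_contra hc
    exact hi (h i (by omega))
  · intro i _ hi
    simpa using hi

lemma part_le (a : ℕ →₀ ℕ) (i : ℕ) : a i ≤ a.sum fun _ x => x := by
  by_cases h : a i = 0
  · omega
  · exact Finset.single_le_sum (f := fun i => a i) (fun _ _ => Nat.zero_le _)
      (Finsupp.mem_support_iff.2 h)

lemma part_zero (a : ℕ →₀ ℕ) (ha : ∀ i, a (i + 1) ≤ a i) (i : ℕ)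
    (hi : (a.sum fun _ x => x) ≤ i) : a i = 0 := by
  by_contra hc
  have hanti : Antitone (fun i => a i) := antitone_nat_of_succ_le ha
  have h1 : ∑ j ∈ range (i+1), 1 ≤ ∑ j ∈ range (i+1), a j := by
    apply Finset.sum_le_sum
    intro j hj
    rw [Finset.mem_range] at hj
    have := hanti (show j ≤ i by omega)
    simp only at this
    omega
  have h2 : ∑ j ∈ range (i+1), a j ≤ a.sum fun _ x => x := by
    rw [Finsupp.sum]
    apply Finset.sum_le_sum_of_ne_zero
    intro j _ hj
    exact Finsupp.mem_support_iff.2 hj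
  simp at h1
  omega

lemma bipSet_finite (m n : ℕ) : (bipSet m n).Finite := by
  have : Set.InjOn (fun (p : (ℕ →₀ ℕ) × (ℕ →₀ ℕ)) =>
      ((fun i : Fin (m+n) => (p.1 i, p.2 i)) : Fin (m+n) → ℕ × ℕ)) (bipSet m n) := by
    rintro ⟨a, b⟩ ⟨h1, h2, h3, h4, h5⟩ ⟨a', b'⟩ ⟨h1', h2', h3', h4', h5'⟩ heq
    simp only at *
    have hh : ∀ i, a i = a' i ∧ b i = b' i := by
      intro i
      by_cases hi : i < m + n
      · have := congrFun heq ⟨i, hi⟩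
        simpa using this
      · rw [part_zero a h1 i (by omega), part_zero b h2 i (by omega),
          part_zero a' h1' i (by omega), part_zero b' h2' i (by omega)]
        simp
    ext i
    · exact (hh i).1
    · exact (hh i).2
  refine Set.Finite.of_finite_image ?_ this
  apply Set.Finite.subset (Set.finite_Iic (fun _ : Fin (m+n) => (m, n)))
  rintro _ ⟨⟨a, b⟩, ⟨h1, h2, h3, h4, h5⟩, rfl⟩
  simp only [Set.mem_Iic]
  intro i
  simp only at *
  exact ⟨by simpa [h4] using part_le a i, by simpa [h5] using part_le b i⟩

def wt (j : ℕ) : ℕ × (ℕ ⊕ ℕ) → ℕ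
  | (e, Sum.inl p) => (j+2)*e + (j+2)*p
  | (e, Sum.inr q) => (j+2)*e + (j+1)*(q+1)

def bxs (N K : ℕ) : Finset (Fin N → ℕ × (ℕ ⊕ ℕ)) :=
  Fintype.piFinset (fun _ : Fin N => range (K+1) ×ˢ (range (K+1)).disjSum (range K))

def enc (a b : ℕ → ℕ) (i : ℕ) : ℕ × (ℕ ⊕ ℕ) :=
  (min (a i) (b i) - max (a (i+1)) (b (i+1)),
    if b i ≤ a i then Sum.inl (a i - b i) else Sum.inr (b i - a i - 1))

lemma enc_sum (a b : ℕ → ℕ) (h : SteadilyDecreasing a b) (L : ℕ) :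
    ∑ j ∈ range L, wt j (enc a b (j+1)) + (L+1) * max (a (L+1)) (b (L+1)) =
     max (a 1) (b 1) + ∑ j ∈ range L, a (j+1) := by
  induction L with
  | zero => simp
  | succ L ih =>
    rw [Finset.sum_range_succ, Finset.sum_range_succ]
    have h1 := h (L+1)
    suffices wt L (enc a b (L+1)) + (L+1+1) * max (a (L+1+1)) (b (L+1+1)) =
      a (L+1) + (L+1) * max (a (L+1)) (b (L+1)) by omega
    unfold enc
    generalize max (a (L+1+1)) (b (L+1+1)) = M at *
    generalize a (L+1) = x at *
    generalize b (L+1) = y at *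
    split_ifs with hxy
    · simp only [wt]
      rw [min_eq_right hxy] at *
      rw [max_eq_left hxy]
      obtain ⟨e, rfl⟩ := Nat.exists_eq_add_of_le h1
      obtain ⟨d, rfl⟩ := Nat.exists_eq_add_of_le hxy
      simp only [Nat.add_sub_cancel_left]
      ring
    · simp only [wt]
      have hxy' : x ≤ y := by omega
      rw [min_eq_left hxy'] at *
      rw [max_eq_right hxy']
      obtain ⟨e, rfl⟩ := Nat.exists_eq_add_of_le h1
      obtain ⟨d, hd⟩ := Nat.exists_eq_add_of_le (show M + e + 1 ≤ y by omega)
      subst hd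
      rw [show M + e + 1 + d - (M+e) - 1 = d by omega]
      simp only [Nat.add_sub_cancel_left]
      ring

lemma enc_inj (a b a' b' : ℕ → ℕ) (h : SteadilyDecreasing a b) (h' : SteadilyDecreasing a' b')
    (i : ℕ) (he : enc a b i = enc a' b' i) (ha : a (i+1) = a' (i+1)) (hb : b (i+1) = b' (i+1)) :
    a i = a' i ∧ b i = b' i := by
  have h1 := h i
  have h2 := h' i
  unfold enc at he
  rw [Prod.mk.injEq] at he
  obtain ⟨he1, he2⟩ := he
  rw [← ha, ← hb] at *
  split_ifs at he2 <;> simp at he2 <;> omega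

lemma comb (k n N K : ℕ) (hk : 0 < k) (hN : k ≤ N) (hK : k ≤ K) :
    Dbip k n ≤ (((bxs N K).filter (fun g => ∑ j : Fin N, wt j (g j) = k)).card : ℤ) := by
  have hkey : bipartitePi k n ≤ bipartitePi (k-1) n +
      ((bxs N K).filter (fun g => ∑ j : Fin N, wt j (g j) = k)).card := by
    rw [bipartitePi_eq, bipartitePi_eq]
    set A1 := {p ∈ bipSet k n | max (p.1 1) (p.2 1) < p.1 0} with hA1
    set A2 := {p ∈ bipSet k n | p.1 0 = max (p.1 1) (p.2 1)} with hA2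
    have hU : bipSet k n ⊆ A1 ∪ A2 := by
      intro p hp
      have := hp.2.2.1 0
      simp only [zero_add] at this
      by_cases hc : max (p.1 1) (p.2 1) < p.1 0
      · exact Or.inl ⟨hp, hc⟩
      · refine Or.inr ⟨hp, ?_⟩
        omega
    have hfin := bipSet_finite k n
    have hf1 : A1.Finite := hfin.subset (fun p hp => hp.1)
    have hf2 : A2.Finite := hfin.subset (fun p hp => hp.1)
    have hstep : (bipSet k n).ncard ≤ A1.ncard + A2.ncard :=
      (Set.ncard_le_ncard hU (hf1.union hf2)).trans (Set.ncard_union_le _ _)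
    have hB1 : A1.ncard ≤ (bipSet (k-1) n).ncard := by
      apply Set.ncard_le_ncard_of_injOn
        (fun p : (ℕ →₀ ℕ) × (ℕ →₀ ℕ) => (p.1.update 0 (p.1 0 - 1), p.2)) _ _ (bipSet_finite _ _)
      · rintro ⟨a, b⟩ ⟨⟨h1, h2, h3, h4, h5⟩, h6⟩
        simp only at h1 h2 h3 h4 h5 h6
        refine ⟨?_, h2, ?_, ?_, h5⟩
        · intro i
          rcases i with _ | i
          · simp; have := h1 0; simp at this; omega
          · simp; exact h1 _
        · intro i
          have := h3 i
          rcases i with _ | i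
          · simp at *; omega
          · simpa using this
        · simp only
          rw [fsum_range _ (k+1) (fun i hi => by
            simp [show i ≠ 0 by omega]; exact part_zero a h1 i (by omega))]
          rw [fsum_range _ (k+1) (fun i hi => part_zero a h1 i (by omega))] at h4
          rw [Finset.sum_range_succ'] at h4 ⊢
          simp at *
          omega
      · rintro ⟨a, b⟩ ⟨_, h6⟩ ⟨a', b'⟩ ⟨_, h6'⟩ heq
        simp only [Prod.mk.injEq] at heq h6 h6' ⊢
        refine ⟨?_, heq.2⟩
        ext i
        have := DFunLike.congr_fun heq.1 i
        rcases i with _ | i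
        · simp at this; omega
        · simpa using this
    have hB2 : A2.ncard ≤ ((bxs N K).filter (fun g => ∑ j : Fin N, wt j (g j) = k)).card := by
      rw [← Set.ncard_coe_finset]
      have hz : ∀ a b : ℕ →₀ ℕ, (a, b) ∈ A2 → ∀ i, k + 1 ≤ i → a i = 0 ∧ b i = 0 := by
        rintro a b ⟨⟨h1, h2, h3, h4, h5⟩, h6⟩ i hi
        simp only at h1 h2 h3 h4 h5 h6
        obtain ⟨i, rfl⟩ : ∃ i', i = i' + 1 := ⟨i-1, by omega⟩
        have := part_zero a h1 i (by omega)
        have h7 := h3 i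
        omega
      apply Set.ncard_le_ncard_of_injOn
        (fun p : (ℕ →₀ ℕ) × (ℕ →₀ ℕ) => (fun j : Fin N => enc p.1 p.2 (j+1))) _ _ (Finset.finite_toSet _)
      · rintro ⟨a, b⟩ hab
        have hz' := hz a b hab
        obtain ⟨⟨h1, h2, h3, h4, h5⟩, h6⟩ := hab
        simp only at h1 h2 h3 h4 h5 h6
        simp only [Finset.coe_filter, Set.mem_ofPred_eq]
        constructor
        · unfold bxs
          rw [Fintype.mem_piFinset]
          intro j
          have e1 := part_le a j
          have e2 := part_le a (j+1)
          have e3 := h3 j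
          rw [h4] at e1 e2
          unfold enc
          rw [Finset.mem_product]
          refine ⟨?_, ?_⟩
          · simp; omega
          · simp only
            split_ifs
            · simp; omega
            · simp; omega
        · have := enc_sum a b h3 N
          rw [Fin.sum_univ_eq_sum_range (fun j => wt j (enc a b (j+1))) N]
          rw [(hz' (N+1) (by omega)).1, (hz' (N+1) (by omega)).2, ← h6] at this
          rw [fsum_range a (N+1) (fun i hi => (hz' i (by omega)).1), Finset.sum_range_succ'] at h4
          simp at this
          omega
      · rintro ⟨a, b⟩ hab ⟨a', b'⟩ hab' heq
        have hz1 := hz a b hab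
        have hz2 := hz a' b' hab'
        obtain ⟨⟨h1, h2, h3, h4, h5⟩, h6⟩ := hab
        obtain ⟨⟨h1', h2', h3', h4', h5'⟩, h6'⟩ := hab'
        simp only at h1 h2 h3 h4 h5 h6 h1' h2' h3' h4' h5' h6' heq
        have hall : ∀ d i, N + 1 ≤ i + d → 1 ≤ i → a i = a' i ∧ b i = b' i := by
          intro d
          induction d with
          | zero =>
            intro i hi _
            rw [(hz1 i (by omega)).1, (hz1 i (by omega)).2, (hz2 i (by omega)).1, (hz2 i (by omega)).2]
            simp
          | succ d ih =>
            intro i hi hi1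
            by_cases hiN : N + 1 ≤ i
            · exact ih i (by omega) hi1
            · obtain ⟨j, rfl⟩ : ∃ i', i = i' + 1 := ⟨i-1, by omega⟩
              have := congrFun heq ⟨j, by omega⟩
              have h8 := ih (j+1+1) (by omega) (by omega)
              exact enc_inj a b a' b' h3 h3' _ this h8.1 h8.2
        have hall' : ∀ i, a (i+1) = a' (i+1) ∧ b (i+1) = b' (i+1) := fun i =>
          hall (N+1) (i+1) (by omega) (by omega)
        have ha0 : a 0 = a' 0 := by
          have := hall' 0
          simp only [zero_add] at this
          rw [h6, h6', this.1, this.2]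
        have hb0 : b 0 = b' 0 := by
          rw [fsum_range b (k+1) (fun i hi => (hz1 i hi).2), Finset.sum_range_succ'] at h5
          rw [fsum_range b' (k+1) (fun i hi => (hz2 i hi).2), Finset.sum_range_succ'] at h5'
          rw [Finset.sum_congr rfl (fun i _ => (hall' i).2)] at h5
          omega
        ext i
        · rcases i with _ | i
          · exact ha0
          · exact (hall' i).1
        · rcases i with _ | i
          · exact hb0
          · exact (hall' i).2
    omega
  unfold Dbip
  rw [if_neg (by omega)]
  omega

lemma int_exp (m : ℤ) : ∫ θ in (-Real.pi)..Real.pi, Complex.exp (Complex.I * (m : ℂ) * (θ : ℂ)) =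
    if m = 0 then ((2 * Real.pi : ℝ) : ℂ) else 0 := by
  split_ifs with h
  · subst h
    simp
    ring
  · have hm : Complex.I * (m : ℂ) ≠ 0 := by
      simp [h]
    rw [integral_exp_mul_complex hm]
    have : Complex.exp (Complex.I * m * (Real.pi : ℂ)) =
        Complex.exp (Complex.I * m * ((-Real.pi : ℝ) : ℂ)) := by
      rw [Complex.exp_eq_exp_iff_exists_int]
      exact ⟨m, by push_cast; ring⟩
    rw [this]
    simp

noncomputable def Phi (N K : ℕ) (z : ℂ) : ℂ :=
  ∏ j : Fin N, ∑ p ∈ range (K+1) ×ˢ (range (K+1)).disjSum (range K), z ^ (wt j p)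

lemma Phi_eq (N K : ℕ) (z : ℂ) : Phi N K z = ∑ g ∈ bxs N K, z ^ (∑ j : Fin N, wt j (g j)) := by
  unfold Phi bxs
  rw [Finset.prod_univ_sum]
  apply Finset.sum_congr rfl
  intro g _
  rw [Finset.prod_pow_eq_pow_sum]

lemma fourier_bd (N K k : ℕ) (x : ℝ) (hx : 0 < x) :
    (((bxs N K).filter (fun g => ∑ j : Fin N, wt j (g j) = k)).card : ℝ) * x ^ k * (2 * Real.pi) ≤
      ∫ θ in (-Real.pi)..Real.pi, ‖Phi N K (x * Complex.exp (θ * Complex.I))‖ := by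
  have h1 : ∫ θ in (-Real.pi)..Real.pi, Phi N K (x * Complex.exp (θ * Complex.I)) *
      Complex.exp (-(k * (θ * Complex.I))) =
      (((((bxs N K).filter (fun g => ∑ j : Fin N, wt j (g j) = k)).card : ℝ) * x ^ k * (2 * Real.pi) : ℝ) : ℂ) := by
    have e1 : ∀ θ : ℝ, Phi N K (x * Complex.exp (θ * Complex.I)) *
      Complex.exp (-(k * (θ * Complex.I))) = ∑ g ∈ bxs N K, (x : ℂ) ^ (∑ j : Fin N, wt j (g j)) *
        Complex.exp (Complex.I * ((((∑ j : Fin N, wt j (g j) : ℕ) : ℤ) - (k : ℤ) : ℤ) : ℂ) * (θ : ℂ)) := by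
      intro θ
      rw [Phi_eq, Finset.sum_mul]
      apply Finset.sum_congr rfl
      intro g _
      rw [mul_pow, mul_assoc, ← Complex.exp_nat_mul, ← Complex.exp_add]
      congr 2
      push_cast
      ring
    simp_rw [e1]
    rw [intervalIntegral.integral_finsetSum]
    · simp_rw [intervalIntegral.integral_const_mul, int_exp]
      rw [Finset.card_filter]
      push_cast
      rw [Finset.sum_mul, Finset.sum_mul]
      apply Finset.sum_congr rfl
      intro g _
      by_cases h : ∑ j : Fin N, wt j (g j) = k
      · have h' : (∑ x : Fin N, ((wt x (g x) : ℕ) : ℤ)) - k = 0 := by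
          rw [← h]; push_cast; ring
        rw [if_pos h', if_pos h, h]; simp
      · have h' : ¬ (∑ x : Fin N, ((wt x (g x) : ℕ) : ℤ)) - k = 0 := by
          intro hh; apply h; zify; linarith
        rw [if_neg h', if_neg h]; simp
    · intro g _
      apply Continuous.intervalIntegrable
      fun_prop
  have h2 : (((bxs N K).filter (fun g => ∑ j : Fin N, wt j (g j) = k)).card : ℝ) * x ^ k * (2 * Real.pi)
      = ‖∫ θ in (-Real.pi)..Real.pi, Phi N K (x * Complex.exp (θ * Complex.I)) *
      Complex.exp (-(k * (θ * Complex.I)))‖ := by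
    rw [h1, Complex.norm_real, Real.norm_of_nonneg]
    have := Real.pi_pos
    positivity
  rw [h2]
  refine (intervalIntegral.norm_integral_le_integral_norm (by linarith [Real.pi_pos])).trans (le_of_eq ?_)
  apply intervalIntegral.integral_congr
  intro θ _
  simp only [norm_mul]
  have : ‖Complex.exp (-(k * (θ * Complex.I)))‖ = 1 := by
    rw [show -((k:ℂ) * (θ * Complex.I)) = ((-(k * θ) : ℝ) : ℂ) * Complex.I by push_cast; ring]
    exact Complex.norm_exp_ofReal_mul_I _
  rw [this, mul_one]

lemma one_sub_lower (z : ℂ) (hz : ‖z‖ < 1) :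
    (1 - ‖z‖) * Real.exp (‖z‖ - z.re) ≤ ‖1 - z‖ := by
  have h1 := Complex.hasSum_taylorSeries_neg_log hz
  have h2 := (Complex.hasSum_re h1)
  have h3 := Real.hasSum_pow_div_log_of_abs_lt_one (x := ‖z‖) (by simpa using hz)
  have hpos : 0 < ‖1 - z‖ := by
    rw [norm_pos_iff, sub_ne_zero]
    rintro rfl
    simp at hz
  have h4 : (-Complex.log (1 - z)).re = - Real.log ‖1 - z‖ := by
    simp [Complex.log_re]
  rw [h4] at h2
  have h2' := (hasSum_nat_add_iff' 1).2 h2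
  simp only [Finset.sum_range_one] at h2'
  have h5 := h3.sub h2'
  have h6 := h5.summable.sum_le_tsum {0} (by
    intro i _
    have e : (z ^ (i+1) / ((i+1 : ℕ) : ℂ)).re = (z^(i+1)).re / ((i:ℝ)+1) := by
      rw [show ((i+1 : ℕ) : ℂ) = (((i:ℝ)+1 : ℝ) : ℂ) by push_cast; ring, Complex.div_ofReal_re]
    rw [e, ← sub_div]
    apply div_nonneg _ (by positivity)
    have := Complex.re_le_norm (z^(i+1))
    rw [norm_pow] at this
    linarith)
  rw [h5.tsum_eq] at h6
  simp at h6
  have h7 : 0 < 1 - ‖z‖ := by linarith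
  rw [← Real.exp_log h7, ← Real.exp_add]
  exact (Real.exp_le_exp.2 h6).trans_eq (Real.exp_log hpos)

lemma factor_eq (j K : ℕ) (z : ℂ) :
    ∑ p ∈ range (K+1) ×ˢ (range (K+1)).disjSum (range K), z ^ (wt j p) =
    (∑ e ∈ range (K+1), (z^(j+2))^e) *
      (∑ p ∈ range (K+1), (z^(j+2))^p + ∑ q ∈ range K, (z^(j+1))^(q+1)) := by
  rw [Finset.sum_product, Finset.sum_mul]
  apply Finset.sum_congr rfl
  intro e _
  rw [Finset.sum_disjSum, mul_add, Finset.mul_sum, Finset.mul_sum]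
  congr 1 <;>
  · apply Finset.sum_congr rfl
    intro p _
    simp only [wt]
    rw [pow_add, pow_mul, pow_mul]

lemma geom_bd (y : ℝ) (h0 : 0 ≤ y) (h1 : y < 1) (n : ℕ) : ∑ i ∈ range n, y ^ i ≤ 1 / (1 - y) := by
  rw [one_div, ← tsum_geometric_of_lt_one h0 h1]
  exact (summable_geometric_of_lt_one h0 h1).sum_le_tsum _ (fun i _ => by positivity)

noncomputable def PR (x : ℝ) (j : ℕ) : ℝ :=
  1 / (1 - x^(j+2)) * ((1 - x^(2*j+3)) / ((1 - x^(j+2)) * (1 - x^(j+1))))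

lemma factor_bd (j K : ℕ) (x : ℝ) (hx : 0 < x) (hx1 : x < 1) (z : ℂ) (hz : ‖z‖ = x) :
    ‖∑ p ∈ range (K+1) ×ˢ (range (K+1)).disjSum (range K), z ^ (wt j p)‖ ≤
      (1 + x^(K+1)) * Real.exp (-(x^(j+2) - (z^(j+2)).re)) * PR x j := by
  rw [factor_eq, norm_mul]
  have hA0 : 0 < x^(j+2) := by positivity
  have hA1 : x^(j+2) < 1 := pow_lt_one₀ hx.le hx1 (by omega)
  have hB0 : 0 < x^(j+1) := by positivity
  have hB1 : x^(j+1) < 1 := pow_lt_one₀ hx.le hx1 (by omega)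
  have hn : ‖z^(j+2)‖ = x^(j+2) := by rw [norm_pow, hz]
  have hn' : ‖z^(j+1)‖ = x^(j+1) := by rw [norm_pow, hz]
  have hlow := one_sub_lower (z^(j+2)) (by rw [hn]; exact hA1)
  rw [hn] at hlow
  have hne : z^(j+2) ≠ 1 := by
    intro h
    rw [h] at hn
    simp at hn
    linarith
  have hpos : 0 < ‖1 - z^(j+2)‖ := by
    rw [norm_pos_iff, sub_ne_zero]; exact hne.symm
  have f1 : ‖∑ e ∈ range (K+1), (z^(j+2))^e‖ ≤
      (1 + x^(K+1)) * Real.exp (-(x^(j+2) - (z^(j+2)).re)) * (1 / (1 - x^(j+2))) := by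
    rw [geom_sum_eq hne, norm_div, norm_sub_rev (z^(j+2)) 1]
    have g1 : ‖(z^(j+2))^(K+1) - 1‖ ≤ 1 + x^(K+1) := by
      refine (norm_sub_le _ _).trans ?_
      rw [norm_pow, hn, norm_one, add_comm]
      gcongr
      exact pow_le_of_le_one hx.le hx1.le (by omega)
    have g2 : 1 / ‖1 - z^(j+2)‖ ≤ Real.exp (-(x^(j+2) - (z^(j+2)).re)) * (1 / (1 - x^(j+2))) := by
      rw [Real.exp_neg, ← one_div, one_div_mul_one_div_rev]
      apply one_div_le_one_div_of_le _ hlow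
      have : 0 < 1 - x^(j+2) := by linarith
      positivity
    rw [div_eq_mul_one_div, mul_assoc]
    gcongr
  have f2 : ‖∑ p ∈ range (K+1), (z^(j+2))^p + ∑ q ∈ range K, (z^(j+1))^(q+1)‖ ≤
      ((1 - x^(2*j+3)) / ((1 - x^(j+2)) * (1 - x^(j+1)))) := by
    have g1 : ‖∑ p ∈ range (K+1), (z^(j+2))^p‖ ≤ 1 / (1 - x^(j+2)) := by
      refine (norm_sum_le _ _).trans ?_
      simp_rw [norm_pow _ , hz]
      exact geom_bd _ hA0.le hA1 _
    have g2 : ‖∑ q ∈ range K, (z^(j+1))^(q+1)‖ ≤ x^(j+1) * (1 / (1 - x^(j+1))) := by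
      refine (norm_sum_le _ _).trans ?_
      simp_rw [norm_pow _ , hz, pow_succ _ _, ← Finset.sum_mul]
      rw [mul_comm]
      have := geom_bd _ hB0.le hB1 K
      simp_rw [pow_succ _ _] at this
      gcongr
    refine (norm_add_le _ _).trans ((add_le_add g1 g2).trans (le_of_eq ?_))
    have : 1 - x^(j+2) ≠ 0 := by linarith
    have : 1 - x^(j+1) ≠ 0 := by linarith
    have hAB : x^(2*j+3) = x^(j+2) * x^(j+1) := by rw [← pow_add]; congr 1; ring
    rw [hAB]
    generalize x^(j+2) = A at *
    generalize x^(j+1) = B at *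
    field_simp
    ring
  unfold PR
  rw [← mul_assoc]
  apply mul_le_mul f1 f2 (norm_nonneg _)
  have : 0 < 1 - x^(j+2) := by linarith
  positivity

noncomputable def pp (x : ℝ) (M : ℕ) : ℝ := ∏ j ∈ range M, 1 / (1 - x^(j+1))

lemma one_sub_pos (x : ℝ) (hx : 0 < x) (hx1 : x < 1) (n : ℕ) : 0 < 1 - x^(n+1) := by
  have := pow_lt_one₀ hx.le hx1 (show n+1 ≠ 0 by omega)
  linarith

lemma pp_pos (x : ℝ) (hx : 0 < x) (hx1 : x < 1) (M : ℕ) : 0 < pp x M := by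
  unfold pp
  apply Finset.prod_pos
  intro j _
  have := one_sub_pos x hx hx1 j
  positivity

lemma pp_succ (x : ℝ) (M : ℕ) : pp x (M+1) = pp x M * (1 / (1 - x^(M+1))) := by
  unfold pp; rw [Finset.prod_range_succ]

lemma pp_mono (x : ℝ) (hx : 0 < x) (hx1 : x < 1) : Monotone (pp x) := by
  apply monotone_nat_of_le_succ
  intro M
  rw [pp_succ]
  have h1 := pp_pos x hx hx1 M
  have h2 := one_sub_pos x hx hx1 M
  apply le_mul_of_one_le_right h1.le
  rw [le_div_iff₀ h2]
  have : 0 < x^(M+1) := by positivity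
  linarith

lemma PR_prod (x : ℝ) (hx : 0 < x) (hx1 : x < 1) (N : ℕ) :
    (∏ j ∈ range N, PR x j) * pp x (2*N+2) = (1 - x) * pp x (N+1)^2 * pp x N * pp (x^2) (N+1) := by
  induction N with
  | zero =>
    have h1 := one_sub_pos x hx hx1 0
    have h2 := one_sub_pos x hx hx1 1
    simp [pp, Finset.prod_range_succ] at *
    field_simp
  | succ N ih =>
    rw [Finset.prod_range_succ, show 2*(N+1)+2 = (2*N+2)+1+1 by ring, pp_succ _ (2*N+2+1),
      pp_succ _ (2*N+2)]
    have h1 := one_sub_pos x hx hx1 (N+1)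
    have h2 := one_sub_pos x hx hx1 N
    have h3 := one_sub_pos x hx hx1 (2*N+2)
    have h4 := one_sub_pos x hx hx1 (2*N+2+1)
    calc _ = ((∏ j ∈ range N, PR x j) * pp x (2*N+2)) * (PR x N * (1 / (1 - x^(2*N+2+1))) * (1 / (1 - x^(2*N+2+1+1)))) := by ring
      _ = _ := by
        rw [ih, pp_succ _ (N+1), pp_succ _ N, pp_succ (x^2) (N+1), ← pow_mul,
          show 2 * (N+1+1) = 2*N+2+1+1 by ring]
        unfold PR
        rw [show 2 * N + 3 = 2*N+2+1 by ring]
        rw [show N + 2 = N+1+1 by ring]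
        generalize 1 - x^(2*N+2+1+1) = a at *
        generalize 1 - x^(2*N+2+1) = b at *
        generalize 1 - x^(N+1+1) = c at *
        generalize 1 - x^(N+1) = d at *
        field_simp

lemma PR_prod_le (x : ℝ) (hx : 0 < x) (hx1 : x < 1) (N : ℕ) :
    (∏ j ∈ range N, PR x j) ≤ (1 - x) * pp x (N+1)^2 * pp (x^2) (N+1) := by
  have h := PR_prod x hx hx1 N
  have h1 := pp_mono x hx hx1 (show N ≤ 2*N+2 by omega)
  have h2 := pp_pos x hx hx1 (2*N+2)
  have h3 : 0 < pp (x^2) (N+1) := pp_pos _ (by positivity) (pow_lt_one₀ hx.le hx1 (by omega)) _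
  have h4 : 0 < 1 - x := by linarith
  refine le_of_mul_le_mul_right ?_ h2
  rw [h]
  calc _ = (1 - x) * pp x (N+1)^2 * pp (x^2) (N+1) * pp x N := by ring
    _ ≤ _ := by gcongr

lemma key_ineq (y : ℝ) (hy : 0 < y) :
    1 / (Real.exp y - 1) + Real.exp (-y) / 2 ≤ 1 / y := by
  have h1 : 0 < Real.exp y - 1 := by linarith [Real.add_one_lt_exp hy.ne']
  have hd1 : ∀ s : ℝ, HasDerivAt (fun s : ℝ => 2 * Real.exp s - 2 - 3 * s + s * Real.exp (-s))
      (2 * Real.exp s - 3 + (Real.exp (-s) - s * Real.exp (-s))) s := by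
    intro s
    have e1 := (Real.hasDerivAt_exp s).const_mul 2
    have e2 := ((hasDerivAt_id s).neg).exp
    have e3 := (hasDerivAt_id s).mul e2
    have e4 := ((e1.sub_const 2).sub ((hasDerivAt_id s).const_mul 3)).add e3
    exact e4.congr_deriv (by simp; ring)
  have hd2 : ∀ s : ℝ, HasDerivAt (fun s : ℝ => 2 * Real.exp s - 3 + (Real.exp (-s) - s * Real.exp (-s)))
      (2 * Real.exp s - 2 * Real.exp (-s) + s * Real.exp (-s)) s := by
    intro s
    have e1 := (Real.hasDerivAt_exp s).const_mul 2
    have e2 := ((hasDerivAt_id s).neg).exp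
    have e3 := (hasDerivAt_id s).mul e2
    have e4 := (e1.sub_const 3).add (e2.sub e3)
    exact e4.congr_deriv (by simp; ring)
  have m2 : MonotoneOn (fun s : ℝ => 2 * Real.exp s - 3 + (Real.exp (-s) - s * Real.exp (-s))) (Set.Ici 0) := by
    apply monotoneOn_of_deriv_nonneg (convex_Ici 0)
    · exact fun s _ => (hd2 s).continuousAt.continuousWithinAt
    · exact fun s _ => (hd2 s).differentiableAt.differentiableWithinAt
    · intro s hs
      rw [interior_Ici, Set.mem_Ioi] at hs
      rw [(hd2 s).deriv]
      have := Real.exp_le_exp.2 (show -s ≤ s by linarith)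
      have := Real.exp_pos (-s)
      nlinarith
  have m1 : MonotoneOn (fun s : ℝ => 2 * Real.exp s - 2 - 3 * s + s * Real.exp (-s)) (Set.Ici 0) := by
    apply monotoneOn_of_deriv_nonneg (convex_Ici 0)
    · exact fun s _ => (hd1 s).continuousAt.continuousWithinAt
    · exact fun s _ => (hd1 s).differentiableAt.differentiableWithinAt
    · intro s hs
      rw [interior_Ici, Set.mem_Ioi] at hs
      rw [(hd1 s).deriv]
      have := m2 (Set.mem_Ici.2 le_rfl) (Set.mem_Ici.2 hs.le) hs.le
      simp at this
      linarith
  have h2 := m1 (Set.mem_Ici.2 le_rfl) (Set.mem_Ici.2 hy.le) hy.le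
  simp only [Real.exp_zero, neg_zero, mul_zero, zero_mul] at h2
  have h3 : Real.exp (-y) * Real.exp y = 1 := by rw [← Real.exp_add]; simp
  rw [div_add_div _ _ h1.ne' two_ne_zero, div_le_div_iff₀ (by positivity) hy]
  nlinarith

lemma neg_log_pp (t : ℝ) (ht : 0 < t) (M : ℕ) :
    Real.log (pp (Real.exp (-t)) M) ≤ Real.pi^2 / (6*t) + Real.log (1 - Real.exp (-t)) / 2 := by
  set x := Real.exp (-t) with hxdef
  have hx : 0 < x := Real.exp_pos _
  have hx1 : x < 1 := by rw [hxdef]; exact Real.exp_lt_one_iff.2 (by linarith)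
  have hlog : Real.log (pp x M) = ∑ j ∈ range M, -Real.log (1 - x^(j+1)) := by
    unfold pp
    rw [Real.log_prod]
    · apply Finset.sum_congr rfl
      intro j _
      rw [one_div, Real.log_inv]
    · intro j _
      have := one_sub_pos x hx hx1 j
      positivity
  have hs : HasSum (fun m : ℕ => ∑ j ∈ range M, (x^(j+1))^(m+1) / ((m:ℝ)+1)) (Real.log (pp x M)) := by
    rw [hlog]
    apply hasSum_sum
    intro j _
    apply Real.hasSum_pow_div_log_of_abs_lt_one
    rw [abs_of_nonneg (by positivity)]
    linarith [one_sub_pos x hx hx1 j]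
  have hz : HasSum (fun m : ℕ => 1 / ((m:ℝ)+1)^2) (Real.pi^2/6) := by
    have := (hasSum_nat_add_iff' 1).2 hasSum_zeta_two
    simpa using this
  have hl : HasSum (fun m : ℕ => x^(m+1) / ((m:ℝ)+1)) (-Real.log (1 - x)) := by
    apply Real.hasSum_pow_div_log_of_abs_lt_one
    rw [abs_of_pos hx]; exact hx1
  have hr := (hz.mul_right (1/t)).sub (hl.div_const 2)
  have hle := hasSum_le (fun m => ?_) hs hr
  · refine hle.trans (le_of_eq ?_)
    field_simp
    ring
  · have hy : 0 < ((m:ℝ)+1) * t := by positivity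
    have hk := key_ineq _ hy
    have hxm : x^(m+1) = Real.exp (-(((m:ℝ)+1)*t)) := by
      rw [hxdef, ← Real.exp_nat_mul]; congr 1; push_cast; ring
    have hym := one_sub_pos x hx hx1 m
    have hgeo : ∑ j ∈ range M, (x^(j+1))^(m+1) ≤ 1 / (Real.exp (((m:ℝ)+1)*t) - 1) := by
      have e1 : ∑ j ∈ range M, (x^(j+1))^(m+1) = x^(m+1) * ∑ j ∈ range M, (x^(m+1))^j := by
        rw [Finset.mul_sum]
        apply Finset.sum_congr rfl
        intro j _
        rw [← pow_mul, ← pow_mul, ← pow_add]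
        congr 1; ring
      have e2 : 1 / (Real.exp (((m:ℝ)+1)*t) - 1) = x^(m+1) * (1 / (1 - x^(m+1))) := by
        have e3 : Real.exp (((m:ℝ)+1)*t) = (x^(m+1))⁻¹ := by rw [hxm, Real.exp_neg, inv_inv]
        rw [e3]
        have : x^(m+1) ≠ 0 := by positivity
        generalize x^(m+1) = X at *
        field_simp
      rw [e1, e2]
      have := geom_bd (x^(m+1)) (by positivity) (by linarith) M
      gcongr
    rw [← Finset.sum_div, div_le_iff₀ (by positivity : (0:ℝ) < m+1)]
    refine hgeo.trans ?_
    rw [← hxm] at hk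
    calc _ ≤ 1 / (((m:ℝ)+1)*t) - x^(m+1)/2 := by linarith
      _ = _ := by field_simp

lemma pp_le (t : ℝ) (ht : 0 < t) (M : ℕ) :
    pp (Real.exp (-t)) M ≤ Real.exp (Real.pi^2 / (6*t)) * Real.sqrt (1 - Real.exp (-t)) := by
  have hx1 : Real.exp (-t) < 1 := Real.exp_lt_one_iff.2 (by linarith)
  have h := neg_log_pp t ht M
  have hp := pp_pos _ (Real.exp_pos (-t)) hx1 M
  rw [← Real.log_sqrt (by linarith)] at h
  have h2 := Real.exp_le_exp.2 h
  rwa [Real.exp_log hp, Real.exp_add, Real.exp_log (Real.sqrt_pos.2 (by linarith))] at h2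

lemma PR_final (t : ℝ) (ht : 0 < t) (N : ℕ) :
    (∏ j ∈ range N, PR (Real.exp (-t)) j) ≤
      2 * (t ^ 2 * Real.sqrt t) * Real.exp (5 * Real.pi^2 / (12 * t)) := by
  have hx : 0 < Real.exp (-t) := Real.exp_pos _
  have hx1 : Real.exp (-t) < 1 := Real.exp_lt_one_iff.2 (by linarith)
  have hxt : 1 - Real.exp (-t) ≤ t := by linarith [Real.add_one_le_exp (-t)]
  have h1 := pp_le t ht (N+1)
  have h2 := pp_le (2*t) (by linarith) (N+1)
  have hsq : Real.exp (-t)^2 = Real.exp (-(2*t)) := by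
    rw [← Real.exp_nat_mul]; congr 1; push_cast; ring
  have hx2 : 1 - Real.exp (-(2*t)) ≤ 2 * t := by linarith [Real.add_one_le_exp (-(2*t))]
  have hs2 : Real.sqrt (1 - Real.exp (-(2*t))) ≤ 2 * Real.sqrt t := by
    rw [Real.sqrt_le_left (by positivity), mul_pow, Real.sq_sqrt ht.le]
    linarith
  have hpp1 := pp_pos _ hx hx1 (N+1)
  have hpp2 := pp_pos (Real.exp (-(2*t))) (Real.exp_pos _) (Real.exp_lt_one_iff.2 (by linarith)) (N+1)
  have h1' : pp (Real.exp (-t)) (N+1)^2 ≤ Real.exp (Real.pi^2 / (6*t))^2 * t := by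
    calc _ ≤ (Real.exp (Real.pi^2 / (6*t)) * Real.sqrt (1 - Real.exp (-t)))^2 := by gcongr
      _ = Real.exp (Real.pi^2 / (6*t))^2 * (1 - Real.exp (-t)) := by
        rw [mul_pow, Real.sq_sqrt (by linarith)]
      _ ≤ _ := by gcongr
  have h2' : pp (Real.exp (-(2*t))) (N+1) ≤ Real.exp (Real.pi^2 / (6*(2*t))) * (2 * Real.sqrt t) :=
    h2.trans (by gcongr)
  refine (PR_prod_le _ hx hx1 N).trans ?_
  rw [hsq]
  calc _ ≤ t * (Real.exp (Real.pi^2 / (6*t))^2 * t) * (Real.exp (Real.pi^2 / (6*(2*t))) * (2 * Real.sqrt t)) := by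
        gcongr
    _ = 2 * (t ^ 2 * Real.sqrt t) * (Real.exp (Real.pi^2 / (6*t))^2 * Real.exp (Real.pi^2 / (6*(2*t)))) := by ring
    _ = _ := by
      congr 1
      rw [← Real.exp_nat_mul, ← Real.exp_add]
      congr 1
      push_cast
      field_simp
      ring

lemma Phi_bd (N K : ℕ) (x : ℝ) (hx : 0 < x) (hx1 : x < 1) (z : ℂ) (hz : ‖z‖ = x) :
    ‖Phi N K z‖ ≤ (1 + x^(K+1))^N * Real.exp (-∑ j ∈ range N, (x^(j+2) - (z^(j+2)).re)) *
      ∏ j ∈ range N, PR x j := by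
  unfold Phi
  rw [norm_prod]
  refine (Finset.prod_le_prod (fun j _ => norm_nonneg _)
    (fun (j : Fin N) _ => factor_bd j K x hx hx1 z hz)).trans (le_of_eq ?_)
  rw [Fin.prod_univ_eq_prod_range (fun j => (1 + x^(K+1)) * Real.exp (-(x^(j+2) - (z^(j+2)).re)) * PR x j) N,
    Finset.prod_mul_distrib, Finset.prod_mul_distrib, Finset.prod_const, Finset.card_range,
    ← Real.exp_sum, Finset.sum_neg_distrib]

lemma osc (N : ℕ) (x θ : ℝ) (hx : 0 < x) (hx1 : x < 1) (z : ℂ)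
    (hzd : z = x * Complex.exp (θ * Complex.I)) :
    (2 * x * (1 - Real.cos θ)) / (2 * (1 - x) * ((1 - x)^2 + 2 * x * (1 - Real.cos θ)))
      - 2 - 2 * x^(N+2) / (1 - x) ≤ ∑ j ∈ range N, (x^(j+2) - (z^(j+2)).re) := by
  have hz : ‖z‖ = x := by
    rw [hzd, norm_mul, Complex.norm_exp_ofReal_mul_I, Complex.norm_real, Real.norm_of_nonneg hx.le, mul_one]
  have hre : z.re = x * Real.cos θ := by
    rw [hzd, Complex.re_ofReal_mul, Complex.exp_ofReal_mul_I_re]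
  have hu : 0 < 1 - x := by linarith
  have hne : z ≠ 1 := by
    rintro rfl
    simp at hz; linarith
  have hpos : 0 < ‖1 - z‖ := by
    rw [norm_pos_iff, sub_ne_zero]; exact hne.symm
  have hle : 1 - x ≤ ‖1 - z‖ := by
    have := norm_sub_norm_le (1:ℂ) z
    rw [norm_one, hz] at this; exact this
  have hsplit : ∑ j ∈ range N, (x^(j+2) - (z^(j+2)).re) =
      (∑ j ∈ range (N+2), x^j) - (∑ j ∈ range (N+2), z^j).re - (x - z.re) := by
    rw [Complex.re_sum, ← Finset.sum_sub_distrib, Finset.sum_range_succ', Finset.sum_range_succ']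
    simp
  have hg1 : ∑ j ∈ range (N+2), x^j = 1 / (1-x) - x^(N+2)/(1-x) := by
    rw [geom_sum_eq (by linarith), ← sub_div, ← neg_div_neg_eq]; ring
  have hg2 : ∑ j ∈ range (N+2), z^j = 1 / (1-z) - z^(N+2)/(1-z) := by
    rw [geom_sum_eq hne, ← sub_div, ← neg_div_neg_eq]; ring
  have hb : -(x^(N+2) / (1-x)) ≤ (z^(N+2)/(1-z)).re := by
    have h1 := (abs_le.1 (Complex.abs_re_le_norm (z^(N+2)/(1-z)))).1
    rw [norm_div, norm_pow, hz] at h1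
    have : x^(N+2) / ‖1-z‖ ≤ x^(N+2) / (1-x) := by gcongr
    linarith
  have hns : Complex.normSq (1 - z) = (1-x)^2 + 2 * x * (1 - Real.cos θ) := by
    have h1 : Complex.normSq z = x^2 := by rw [Complex.normSq_eq_norm_sq, hz]
    rw [Complex.normSq_sub]
    simp [h1, hre]
    ring
  have hinv : (1 / (1-z)).re = (1 - x * Real.cos θ) / ((1-x)^2 + 2 * x * (1 - Real.cos θ)) := by
    rw [one_div, Complex.inv_re, hns]
    simp [hre]
  have hw : 0 ≤ 2 * x * (1 - Real.cos θ) := by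
    have := Real.cos_le_one θ
    have : 0 ≤ 1 - Real.cos θ := by linarith
    positivity
  have hx2 : x - z.re ≤ 2 := by
    have := (abs_le.1 (Complex.abs_re_le_norm z)).1
    rw [hz] at this
    linarith
  have hmain : (2 * x * (1 - Real.cos θ)) / (2 * (1 - x) * ((1 - x)^2 + 2 * x * (1 - Real.cos θ))) ≤
      1 / (1-x) - (1 - x * Real.cos θ) / ((1-x)^2 + 2 * x * (1 - Real.cos θ)) := by
    have e : 1 - x * Real.cos θ = (1 - x) + (2 * x * (1 - Real.cos θ)) / 2 := by ring
    rw [e]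
    have hu1 : 1 - x < 1 := by linarith
    generalize 2 * x * (1 - Real.cos θ) = w at *
    generalize 1 - x = u at *
    have hd : 0 < u^2 + w := by positivity
    rw [div_sub_div _ _ hu.ne' hd.ne', div_le_div_iff₀ (by positivity) (by positivity)]
    have : 0 ≤ u * (u^2+w) * w * (1 - u) := by
      have : 0 ≤ 1 - u := by linarith
      positivity
    nlinarith
  have e2 : 2 * x^(N+2) / (1 - x) = x^(N+2)/(1-x) + x^(N+2)/(1-x) := by ring
  rw [hsplit, hg1, hg2, Complex.sub_re, hinv, e2]
  linarith

lemma exp_split (u w t v : ℝ) (hu : 0 < u) (hut : u ≤ t) (hw : 0 ≤ w) (hv : v ≤ w / 4) :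
    Real.exp (-(w / (2 * u * (u^2 + w)))) ≤ Real.exp (-(v / t^3)) + Real.exp (-(1/(4*t))) := by
  have ht : 0 < t := by linarith
  by_cases h : w ≤ u^2
  · have h1 : v / t^3 ≤ w / (2 * u * (u^2 + w)) := by
      calc v / t^3 ≤ (w/4) / t^3 := by gcongr
        _ ≤ (w/4) / u^3 := by gcongr
        _ = w / (2 * u * (u^2 + u^2)) := by field_simp; ring
        _ ≤ _ := by gcongr
    have := Real.exp_le_exp.2 (neg_le_neg h1)
    have := Real.exp_pos (-(1/(4*t)))
    linarith
  · have hw' : 0 < w := by nlinarith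
    have h1 : 1/(4*t) ≤ w / (2 * u * (u^2 + w)) := by
      calc 1/(4*t) ≤ 1/(4*u) := by gcongr
        _ = w / (2 * u * (w + w)) := by field_simp; ring
        _ ≤ _ := by gcongr; linarith
    have := Real.exp_le_exp.2 (neg_le_neg h1)
    have := Real.exp_pos (-(v/t^3))
    linarith

lemma exp_small (t : ℝ) (ht : 0 < t) : Real.exp (-(1/(4*t))) ≤ 32 * t^2 := by
  have h := Real.quadratic_le_exp_of_nonneg (x := 1/(4*t)) (by positivity)
  have h0 : 0 < 1/(4*t) := by positivity
  rw [Real.exp_neg, inv_le_comm₀ (Real.exp_pos _) (by positivity)]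
  have : (32 * t^2)⁻¹ = (1/(4*t))^2/2 := by field_simp; ring
  rw [this]
  linarith

lemma gauss_bd (δ t : ℝ) (hδ : 0 < δ) (ht : 0 < t) :
    ∫ θ in (-Real.pi)..Real.pi, Real.exp (-(δ * θ^2 / t^3)) ≤ Real.sqrt (Real.pi / δ) * (t * Real.sqrt t) := by
  have hb : 0 < δ / t^3 := by positivity
  have e : ∀ θ : ℝ, Real.exp (-(δ * θ^2 / t^3)) = Real.exp (-(δ/t^3) * θ^2) := by
    intro θ; congr 1; ring
  simp_rw [e]
  rw [intervalIntegral.integral_of_le (by linarith [Real.pi_pos])]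
  refine (MeasureTheory.setIntegral_le_integral (integrable_exp_neg_mul_sq hb)
    (Filter.Eventually.of_forall fun θ => (Real.exp_pos _).le)).trans (le_of_eq ?_)
  rw [integral_gaussian]
  have h1 : Real.pi / (δ / t^3) = (Real.pi / δ) * (t^2 * t) := by field_simp
  rw [h1, Real.sqrt_mul (by have := Real.pi_pos; positivity), Real.sqrt_mul (by positivity),
    Real.sqrt_sq ht.le]

lemma card_bd (T : ℝ) (hT : 0 < T) : ∃ C > (0:ℝ), ∀ t : ℝ, 0 < t → t ≤ T → ∀ k : ℕ, ∃ N K : ℕ, k ≤ N ∧ k ≤ K ∧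
    (((bxs N K).filter (fun g => ∑ j : Fin N, wt j (g j) = k)).card : ℝ) ≤
      C * t^4 * Real.exp (t * k + 5 * Real.pi^2 / (12 * t)) := by
  have hpi := Real.pi_pos
  set δ := Real.exp (-T) / Real.pi^2 with hδd
  have hδ : 0 < δ := by positivity
  set C1 := Real.sqrt (Real.pi / δ) + 2 * Real.pi * (32 * Real.sqrt T) with hC1
  refine ⟨Real.exp 4 * 2 * C1 / (2 * Real.pi), by positivity, ?_⟩
  intro t ht htT k
  set x := Real.exp (-t) with hxd
  have hx : 0 < x := Real.exp_pos _
  have hx1 : x < 1 := Real.exp_lt_one_iff.2 (by linarith)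
  have hxt : 1 - x ≤ t := by linarith [Real.add_one_le_exp (-t)]
  have hxT : Real.exp (-T) ≤ x := Real.exp_le_exp.2 (by linarith)
  have hlim := tendsto_pow_atTop_nhds_zero_of_lt_one hx.le hx1
  have hu : 0 < 1 - x := by linarith
  obtain ⟨N, hN1, hN2⟩ : ∃ N, k ≤ N ∧ 2 * x^(N+2) / (1-x) ≤ 1 := by
    have h1 := hlim.eventually_le_const (show (0:ℝ) < (1-x)/2 by positivity)
    obtain ⟨N, h2, h3⟩ := (h1.and (Filter.eventually_ge_atTop k)).exists
    refine ⟨N, h3, ?_⟩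
    rw [div_le_one hu]
    have : x^(N+2) ≤ x^N := pow_le_pow_of_le_one hx.le hx1.le (by omega)
    linarith
  obtain ⟨K, hK1, hK2⟩ : ∃ K, k ≤ K ∧ N * x^(K+1) ≤ 1 := by
    have h1 := hlim.eventually_le_const (show (0:ℝ) < 1/(N+1) by positivity)
    obtain ⟨K, h2, h3⟩ := (h1.and (Filter.eventually_ge_atTop k)).exists
    refine ⟨K, h3, ?_⟩
    have h4 : x^(K+1) ≤ x^K := pow_le_pow_of_le_one hx.le hx1.le (by omega)
    have h5 : x^(K+1) ≤ 1/(N+1) := h4.trans h2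
    rw [le_div_iff₀ (by positivity)] at h5
    have : 0 < x^(K+1) := by positivity
    nlinarith
  refine ⟨N, K, hN1, hK1, ?_⟩
  set B := 2 * (t ^ 2 * Real.sqrt t) * Real.exp (5 * Real.pi^2 / (12 * t)) with hB
  have hBpos : 0 < B := by positivity
  have hone : (1 + x^(K+1))^N ≤ Real.exp 1 := by
    calc (1 + x^(K+1))^N ≤ (Real.exp (x^(K+1)))^N := by
          gcongr
          linarith [Real.add_one_le_exp (x^(K+1))]
      _ = Real.exp (N * x^(K+1)) := by rw [← Real.exp_nat_mul]
      _ ≤ _ := Real.exp_le_exp.2 hK2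
  have hpt : ∀ θ ∈ Set.Icc (-Real.pi) Real.pi, ‖Phi N K (x * Complex.exp (θ * Complex.I))‖ ≤
      Real.exp 4 * B * (Real.exp (-(δ * θ^2 / t^3)) + Real.exp (-(1/(4*t)))) := by
    intro θ hθ
    have hz : ‖(x * Complex.exp (θ * Complex.I) : ℂ)‖ = x := by
      rw [norm_mul, Complex.norm_exp_ofReal_mul_I, Complex.norm_real, Real.norm_of_nonneg hx.le, mul_one]
    have h1 := Phi_bd N K x hx hx1 _ hz
    have h2 := osc N x θ hx hx1 _ rfl
    have hcos := Real.cos_le_one_sub_mul_cos_sq (abs_le.2 hθ)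
    have hw : 0 ≤ 2 * x * (1 - Real.cos θ) := by
      have := Real.cos_le_one θ
      have : 0 ≤ 1 - Real.cos θ := by linarith
      positivity
    have hv : δ * θ^2 ≤ 2 * x * (1 - Real.cos θ) / 4 := by
      calc δ * θ^2 = Real.exp (-T) * (2 / Real.pi^2 * θ^2) / 2 := by rw [hδd]; ring
        _ ≤ x * (1 - Real.cos θ) / 2 := by
          gcongr
          linarith
        _ = _ := by ring
    have h3 := exp_split (1-x) _ t _ hu hxt hw hv
    have h4 : Real.exp (-∑ j ∈ range N, (x^(j+2) - ((x * Complex.exp (θ * Complex.I) : ℂ)^(j+2)).re)) ≤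
        Real.exp 3 * (Real.exp (-(δ * θ^2 / t^3)) + Real.exp (-(1/(4*t)))) := by
      refine le_trans ?_ (mul_le_mul_of_nonneg_left h3 (Real.exp_pos 3).le)
      rw [← Real.exp_add]
      apply Real.exp_le_exp.2
      linarith
    have h5 : ∏ j ∈ range N, PR x j ≤ B := PR_final t ht N
    have h6 : 0 ≤ ∏ j ∈ range N, PR x j := by
      apply Finset.prod_nonneg
      intro j _
      unfold PR
      have a1 := one_sub_pos x hx hx1 (j+1)
      have a2 := one_sub_pos x hx hx1 j
      have a3 := one_sub_pos x hx hx1 (2*j+2)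
      exact mul_nonneg (div_nonneg zero_le_one a1.le) (div_nonneg a3.le (mul_nonneg a1.le a2.le))
    refine h1.trans ?_
    calc _ ≤ Real.exp 1 * (Real.exp 3 * (Real.exp (-(δ * θ^2 / t^3)) + Real.exp (-(1/(4*t))))) * B := by
          gcongr
      _ = (Real.exp 1 * Real.exp 3) * B * (Real.exp (-(δ * θ^2 / t^3)) + Real.exp (-(1/(4*t)))) := by ring
      _ = _ := by rw [← Real.exp_add]; norm_num
  have hint : ∫ θ in (-Real.pi)..Real.pi, ‖Phi N K (x * Complex.exp (θ * Complex.I))‖ ≤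
      Real.exp 4 * B * (C1 * (t * Real.sqrt t)) := by
    have hc1 : Continuous (fun θ : ℝ => ‖Phi N K (x * Complex.exp (θ * Complex.I))‖) := by
      unfold Phi; fun_prop
    have hc2 : Continuous (fun θ : ℝ => Real.exp (-(δ * θ^2 / t^3))) := by fun_prop
    have hc3 : Continuous (fun θ : ℝ => Real.exp 4 * B * (Real.exp (-(δ * θ^2 / t^3)) + Real.exp (-(1/(4*t))))) := by
      fun_prop
    refine (intervalIntegral.integral_mono_on (by linarith) (hc1.intervalIntegrable _ _)
      (hc3.intervalIntegrable _ _) hpt).trans ?_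
    rw [intervalIntegral.integral_const_mul, intervalIntegral.integral_add (hc2.intervalIntegrable _ _)
      (by simp), intervalIntegral.integral_const]
    have g1 := gauss_bd δ t hδ ht
    have g2 := exp_small t ht
    have g3 : t^2 ≤ Real.sqrt T * (t * Real.sqrt t) := by
      have : Real.sqrt t ≤ Real.sqrt T := Real.sqrt_le_sqrt htT
      calc t^2 = Real.sqrt t * (t * Real.sqrt t) := by
            have := Real.mul_self_sqrt ht.le
            linear_combination (-t) * this
        _ ≤ _ := by gcongr
    gcongr
    rw [smul_eq_mul, hC1, add_mul]
    apply add_le_add g1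
    calc _ = 2 * Real.pi * Real.exp (-(1/(4*t))) := by ring
      _ ≤ 2 * Real.pi * (32 * t^2) := by gcongr
      _ ≤ 2 * Real.pi * (32 * (Real.sqrt T * (t * Real.sqrt t))) := by gcongr
      _ = _ := by ring
  have hF := (fourier_bd N K k x hx).trans hint
  have hxk : x^k = Real.exp (-(t*k)) := by
    rw [hxd, ← Real.exp_nat_mul]; congr 1; ring
  rw [hxk] at hF
  have hee : Real.exp (-(t*k)) * Real.exp (t*k) = 1 := by rw [← Real.exp_add]; simp
  have hfin := mul_le_mul_of_nonneg_right hF (Real.exp_pos (t*k)).le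
  have hss := Real.mul_self_sqrt ht.le
  rw [Real.exp_add]
  rw [div_mul_eq_mul_div, div_mul_eq_mul_div, le_div_iff₀ (by positivity)]
  calc _ = (((bxs N K).filter (fun g => ∑ j : Fin N, wt j (g j) = k)).card : ℝ) * Real.exp (-(t*k)) * (2 * Real.pi) * Real.exp (t*k) := by
        linear_combination (-(((bxs N K).filter (fun g => ∑ j : Fin N, wt j (g j) = k)).card : ℝ) * (2 * Real.pi)) * hee
    _ ≤ _ := hfin
    _ = Real.exp 4 * 2 * C1 * (t^3 * (Real.sqrt t * Real.sqrt t)) * (Real.exp (t*k) * Real.exp (5 * Real.pi^2 / (12 * t))) := by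
        rw [hB]; ring
    _ = _ := by rw [hss]; ring

/-- there is `C > 0` with `D(k,n) ≤ C·k⁻²·e^{c√k}` for all positive
integers `k ≤ n`, where `c = 2π√(5/12)`. -/
theorem Dbip_upper_bound (c : ℝ) (hc : c = 2 * Real.pi * Real.sqrt (5 / 12)) :
    ∃ C > (0 : ℝ), ∀ k n : ℕ, 0 < k → 0 < n → k ≤ n →
      ((Dbip k n : ℤ) : ℝ) ≤ C * ((k : ℝ) ^ 2)⁻¹ * Real.exp (c * Real.sqrt k) := by
  obtain ⟨C, hC, h⟩ := card_bd (c/2) (by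
    rw [hc]; have := Real.pi_pos; positivity)
  have hpi := Real.pi_pos
  have hcpos : 0 < c := by rw [hc]; positivity
  have hc2 : (c/2)^2 = 5 * Real.pi^2 / 12 := by
    rw [hc, show 2 * Real.pi * Real.sqrt (5/12) / 2 = Real.pi * Real.sqrt (5/12) by ring, mul_pow,
      Real.sq_sqrt (by norm_num)]
    ring
  refine ⟨C * (c/2)^4, by positivity, ?_⟩
  intro k n hk _ _
  have hk1 : (1:ℝ) ≤ k := by exact_mod_cast hk
  have hs1 : 1 ≤ Real.sqrt k := by rw [Real.one_le_sqrt]; exact hk1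
  have hs0 : 0 < Real.sqrt k := by linarith
  have hsq : Real.sqrt k ^ 2 = k := Real.sq_sqrt (by linarith)
  obtain ⟨N, K, hN, hK, hb⟩ := h (c/2 / Real.sqrt k) (by positivity)
    (div_le_self (by positivity) hs1) k
  have h1 := comb k n N K hk hN hK
  have h2 : ((Dbip k n : ℤ) : ℝ) ≤
      (((bxs N K).filter (fun g => ∑ j : Fin N, wt j (g j) = k)).card : ℝ) := by
    exact_mod_cast h1
  refine (h2.trans hb).trans (le_of_eq ?_)
  have e1 : c/2 / Real.sqrt k * k + 5 * Real.pi^2 / (12 * (c/2 / Real.sqrt k)) = c * Real.sqrt k := by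
    have : 5 * Real.pi^2 / (12 * (c/2 / Real.sqrt k)) = (5 * Real.pi^2 / 12) / (c/2 / Real.sqrt k) := by
      field_simp
    rw [this, ← hc2]
    nth_rewrite 2 [← hsq]
    field_simp
    ring
  have e2 : (c/2 / Real.sqrt k)^4 = (c/2)^4 * ((k:ℝ)^2)⁻¹ := by
    rw [div_pow, show Real.sqrt k ^ 4 = (Real.sqrt k ^ 2)^2 by ring, hsq, div_eq_mul_inv]
  rw [e1, e2]
  ring
end

section
/- For all integers m ≥ n ≥ 0, π(m,n) = Σ_{0 ≤ k ≤ n} c(n − k) · α(m − n, k), where α(s,k) = Σ_{ℓ ≥ 0} (−1)^ℓ p(k − ℓ(ℓ+1)/2 − ℓs) and p(r) := 0 for all r < 0. -/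
open Finset

namespace BipAux

abbrev MS := Multiset ℕ

/-- triples `(e,u,v)` encoding bipartite partitions with difference `s`. -/
def T (s n : ℕ) : Type := {x : MS × MS × MS //
  x.2.1.card = x.2.2.card + s ∧
  2 * (x.1.sum + x.1.card) + x.2.1.sum + (x.2.2.sum + x.2.2.card) = n}

/-- unrestricted triples -/
def CP (n : ℕ) (x : MS × MS × MS) : Prop :=
  2 * (x.1.sum + x.1.card) + (x.2.1.sum + x.2.1.card) + (x.2.2.sum + x.2.2.card) = n

/-- prepend a number of zeros to the shifted multiset -/
def mc (t : ℕ) (m : MS) : MS := Multiset.replicate t 0 + m.map Nat.succ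

lemma mc_card (t : ℕ) (m : MS) : (mc t m).card = t + m.card := by simp [mc]

lemma sum_map_succ (m : MS) : (m.map Nat.succ).sum = m.sum + m.card := by
  induction m using Multiset.induction with
  | empty => simp
  | cons a s ih => simp [ih]; omega

lemma mc_sum (t : ℕ) (m : MS) : (mc t m).sum = m.sum + m.card := by
  rw [mc, Multiset.sum_add, sum_map_succ]; simp

lemma mc_surj (w : MS) : ∃ t m, w = mc t m := by
  induction w using Multiset.induction with
  | empty => exact ⟨0, 0, by simp [mc]⟩
  | cons a s ih =>
    obtain ⟨t, m, rfl⟩ := ih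
    cases a with
    | zero => exact ⟨t + 1, m, by simp [mc, Multiset.replicate_succ]⟩
    | succ k => exact ⟨t, k ::ₘ m, by simp [mc]⟩

lemma mc_inj {t t' : ℕ} {m m' : MS} (h : mc t m = mc t' m') : t = t' ∧ m = m' := by
  have h0 : t = t' := by
    have := congrArg (Multiset.count 0) h
    have hz : ∀ m : MS, Multiset.count 0 (m.map Nat.succ) = 0 := by
      intro m; rw [Multiset.count_eq_zero]; simp
    simpa [mc, hz, Multiset.count_replicate_self] using this
  subst h0
  refine ⟨rfl, ?_⟩
  have := add_left_cancel h
  exact Multiset.map_injective Nat.succ_injective this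

lemma cardT1 (s n : ℕ) :
    Nat.card (T s n) = Nat.card {x // CP n x ∧ x.2.1.card ≤ x.2.2.card + s} := by
  symm
  refine Nat.card_eq_of_bijective
    (fun x => (⟨(x.1.1, mc (x.1.2.2.card + s - x.1.2.1.card) x.1.2.1, x.1.2.2), ?_⟩ : T s n)) ⟨?_, ?_⟩
  · obtain ⟨⟨e, l, m⟩, h1, h2⟩ := x
    simp only [CP] at h1 h2 ⊢
    rw [mc_card, mc_sum]
    omega
  · rintro ⟨⟨e, l, m⟩, h1, h2⟩ ⟨⟨e', l', m'⟩, h1', h2'⟩ h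
    have h := congrArg Subtype.val h
    simp only [Prod.mk.injEq] at h
    obtain ⟨rfl, h, rfl⟩ := h
    obtain ⟨_, rfl⟩ := mc_inj h
    rfl
  · rintro ⟨⟨e, u, v⟩, h1, h2⟩
    obtain ⟨t, l, rfl⟩ := mc_surj u
    simp only [mc_card, mc_sum] at h1 h2
    refine ⟨⟨(e, l, v), ?_, ?_⟩, ?_⟩
    · simp only [CP]; omega
    · simp only; omega
    · apply Subtype.ext
      simp only [Prod.mk.injEq, true_and, and_true]
      congr 1; omega

lemma cardT2 (s n : ℕ) :
    Nat.card (T (s+1) n) = Nat.card {x // CP (n+s+1) x ∧ ¬ x.2.1.card ≤ x.2.2.card + s} := by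
  symm
  refine Nat.card_eq_of_bijective
    (fun x => (⟨(x.1.1, x.1.2.1, mc (x.1.2.1.card - x.1.2.2.card - s - 1) x.1.2.2), ?_⟩ : T (s+1) n)) ⟨?_, ?_⟩
  · obtain ⟨⟨e, l, m⟩, h1, h2⟩ := x
    simp only [CP] at h1 h2 ⊢
    rw [mc_card, mc_sum]
    omega
  · rintro ⟨⟨e, l, m⟩, h1, h2⟩ ⟨⟨e', l', m'⟩, h1', h2'⟩ h
    have h := congrArg Subtype.val h
    simp only [Prod.mk.injEq] at h
    obtain ⟨rfl, rfl, h⟩ := h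
    obtain ⟨_, rfl⟩ := mc_inj h
    rfl
  · rintro ⟨⟨e, u, v⟩, h1, h2⟩
    obtain ⟨t, l, rfl⟩ := mc_surj v
    simp only [mc_card, mc_sum] at h1 h2
    refine ⟨⟨(e, u, l), ?_, ?_⟩, ?_⟩
    · simp only [CP]; omega
    · simp only; omega
    · apply Subtype.ext
      simp only [Prod.mk.injEq, true_and]
      congr 1; omega

lemma map_succ_pred (m : MS) (h : ∀ i ∈ m, 0 < i) : (m.map Nat.pred).map Nat.succ = m := by
  rw [Multiset.map_map]
  conv_rhs => rw [← Multiset.map_id m]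
  apply Multiset.map_congr rfl
  intro x hx
  have := h x hx
  simp; omega

abbrev P (n : ℕ) := {m : MS // m.sum + m.card = n}

lemma P_bij (n : ℕ) : ∃ f : P n → Nat.Partition n, Function.Bijective f := by
  refine ⟨fun m => ⟨m.1.map Nat.succ, ?_, ?_⟩, ?_, ?_⟩
  · intro i hi; simp at hi; obtain ⟨a, _, rfl⟩ := hi; omega
  · rw [sum_map_succ, m.2]
  · intro m m' h
    exact Subtype.ext (Multiset.map_injective Nat.succ_injective (congrArg Nat.Partition.parts h))
  · rintro ⟨m, h1, h2⟩
    have := map_succ_pred m (fun i hi => h1 hi)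
    refine ⟨⟨m.map Nat.pred, ?_⟩, ?_⟩
    · rw [← sum_map_succ, this, h2]
    · ext1; exact this

instance (n : ℕ) : Finite (P n) := by
  obtain ⟨f, hf⟩ := P_bij n
  exact Finite.of_injective f hf.1

lemma card_P (n : ℕ) : Nat.card (P n) = partitionCount n := by
  obtain ⟨f, hf⟩ := P_bij n
  exact Nat.card_eq_of_bijective f hf

abbrev Q (n : ℕ) := {x : MS × MS // 2 * (x.1.sum + x.1.card) + (x.2.sum + x.2.card) = n}

instance (n : ℕ) : Finite (Q n) := by
  let f : Q n → (Σ i : Fin (n+1), P i) × (Σ i : Fin (n+1), P i) := fun x =>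
    (⟨⟨x.1.1.sum + x.1.1.card, by have := x.2; omega⟩, ⟨x.1.1, rfl⟩⟩,
     ⟨⟨x.1.2.sum + x.1.2.card, by have := x.2; omega⟩, ⟨x.1.2, rfl⟩⟩)
  let g : (Σ i : Fin (n+1), P i) × (Σ i : Fin (n+1), P i) → MS × MS := fun x => (x.1.2.1, x.2.2.1)
  apply Finite.of_injective f
  intro x y h
  exact Subtype.ext (congrArg g h)

lemma sum_map_two (m : MS) : (m.map fun i => 2 * (i + 1)).sum = 2 * (m.sum + m.card) := by
  induction m using Multiset.induction with
  | empty => simp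
  | cons a s ih => simp [ih]; omega

lemma card_Q (n : ℕ) : Nat.card (Q n) = cubicPartition n := by
  refine Nat.card_eq_of_bijective
    (fun x => ⟨(x.1.2.map Nat.succ, x.1.1.map fun i => 2 * (i + 1)), ?_, ?_, ?_⟩) ⟨?_, ?_⟩
  · intro i hi; simp at hi; obtain ⟨a, _, rfl⟩ := hi; omega
  · intro i hi; simp at hi; obtain ⟨a, _, rfl⟩ := hi; exact ⟨by omega, by simp⟩
  · have := x.2
    simp only [sum_map_succ, sum_map_two]; omega
  · rintro ⟨⟨e, l⟩, h⟩ ⟨⟨e', l'⟩, h'⟩ hh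
    have hh := congrArg Subtype.val hh
    simp only [Prod.mk.injEq] at hh
    have h1 := Multiset.map_injective Nat.succ_injective hh.1
    have h2 : e = e' := Multiset.map_injective (fun a b h => by simpa using h) hh.2
    subst h1 h2; rfl
  · rintro ⟨⟨p, q⟩, h1, h2, h3⟩
    simp only at h1 h2 h3
    have e1 := map_succ_pred p h1
    have e2 : (q.map fun i => i / 2 - 1).map (fun i => 2 * (i + 1)) = q := by
      rw [Multiset.map_map]
      conv_rhs => rw [← Multiset.map_id q]
      apply Multiset.map_congr rfl
      intro x hx
      obtain ⟨h, k, rfl⟩ := h2 x hx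
      simp; omega
    refine ⟨⟨(q.map fun i => i / 2 - 1, p.map Nat.pred), ?_⟩, ?_⟩
    · simp only
      rw [← sum_map_two, ← sum_map_succ, e1, e2]; omega
    · apply Subtype.ext
      simp only [Prod.mk.injEq]
      exact ⟨e1, e2⟩

lemma C_bij (n : ℕ) : ∃ f : {x // CP n x} → Σ k : Fin (n+1), Q (n - k) × P k,
    Function.Bijective f := by
  refine ⟨fun x => ⟨⟨x.1.2.2.sum + x.1.2.2.card, ?_⟩, ⟨(x.1.1, x.1.2.1), ?_⟩, ⟨x.1.2.2, rfl⟩⟩, ?_, ?_⟩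
  · have := x.2; simp only [CP] at this; omega
  · have := x.2; simp only [CP] at this; simp only; omega
  · intro x y h
    let g : (Σ k : Fin (n+1), Q (n - k) × P k) → MS × MS × MS :=
      fun z => (z.2.1.1.1, z.2.1.1.2, z.2.2.1)
    exact Subtype.ext (congrArg g h)
  · rintro ⟨⟨k, hk⟩, ⟨⟨e, l⟩, h⟩, ⟨m, h'⟩⟩
    simp only at h h'
    subst h'
    refine ⟨⟨(e, l, m), ?_⟩, rfl⟩
    simp only [CP]; omega

instance (n : ℕ) : Finite {x // CP n x} := by
  obtain ⟨f, hf⟩ := C_bij n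
  exact Finite.of_injective f hf.1

lemma card_C (n : ℕ) : Nat.card {x // CP n x} =
    ∑ k ∈ Finset.range (n+1), cubicPartition (n - k) * partitionCount k := by
  obtain ⟨f, hf⟩ := C_bij n
  rw [Nat.card_eq_of_bijective f hf, Nat.card_sigma, Finset.sum_range]
  simp [Nat.card_prod, card_P, card_Q]

lemma card_split {α : Type*} (p q : α → Prop) [Finite {x // p x}] :
    Nat.card {x // p x ∧ q x} + Nat.card {x // p x ∧ ¬ q x} = Nat.card {x // p x} := by
  classical
  have e1 := Nat.card_congr (Equiv.subtypeSubtypeEquivSubtypeInter p q)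
  have e2 := Nat.card_congr (Equiv.subtypeSubtypeEquivSubtypeInter p (fun x => ¬ q x))
  rw [← e1, ← e2, ← Nat.card_sum]
  exact Nat.card_congr (Equiv.sumCompl (fun x : {x // p x} => q x))

lemma T_rec (s n : ℕ) : Nat.card (T s (n+s+1)) + Nat.card (T (s+1) n) =
    ∑ k ∈ Finset.range (n+s+1+1), cubicPartition (n+s+1 - k) * partitionCount k := by
  rw [cardT1, cardT2, card_split, card_C]

lemma T_small (s n : ℕ) (h : n < s + 1) : Nat.card (T s n) =
    ∑ k ∈ Finset.range (n+1), cubicPartition (n - k) * partitionCount k := by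
  rw [cardT1, ← card_C, ← card_split (CP n) (fun x => x.2.1.card ≤ x.2.2.card + s)]
  have : IsEmpty {x // CP n x ∧ ¬ x.2.1.card ≤ x.2.2.card + s} := by
    constructor
    rintro ⟨x, h1, h2⟩
    simp only [CP] at h1
    omega
  have h0 := @Nat.card_of_isEmpty _ this
  omega

/-! alpha -/

lemma tri (ℓ : ℕ) : ((ℓ + 1 : ℕ) : ℤ) * (((ℓ + 1 : ℕ) : ℤ) + 1) / 2 = (ℓ : ℤ) * (ℓ + 1) / 2 + ℓ + 1 := by
  have : ((ℓ + 1 : ℕ) : ℤ) * (((ℓ + 1 : ℕ) : ℤ) + 1) = (ℓ : ℤ) * (ℓ + 1) + (ℓ + 1) * 2 := by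
    push_cast; ring
  rw [this, Int.add_mul_ediv_right _ _ (by norm_num)]; ring

/-- the summand for an integer argument -/
noncomputable def at' (s : ℕ) (k : ℤ) (ℓ : ℕ) : ℤ :=
  (-1 : ℤ) ^ ℓ * (partitionCountInt (k - ℓ * (ℓ + 1) / 2 - ℓ * s) : ℤ)

lemma at_zero (s : ℕ) (k : ℤ) (ℓ : ℕ) (h : k < ℓ) : at' s k ℓ = 0 := by
  unfold at'
  rw [partitionCountInt, if_neg]
  · simp
  · have h1 : (ℓ : ℤ) ≤ ℓ * (ℓ + 1) / 2 := by
      rw [Int.le_ediv_iff_mul_le (by norm_num)]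
      rcases ℓ with _ | ℓ
      · simp
      · push_cast; nlinarith
    have h2 : (0 : ℤ) ≤ ℓ * s := by positivity
    omega

lemma at_summable (s : ℕ) (k : ℤ) : Summable (at' s k) := by
  apply summable_of_hasFiniteSupport
  apply (Set.finite_Iio (k.toNat + 1)).subset
  intro ℓ hℓ
  by_contra hc
  simp only [Set.mem_Iio, not_lt] at hc
  exact hℓ (at_zero s k ℓ (by omega))

lemma at_succ (s : ℕ) (k : ℤ) (ℓ : ℕ) : at' s k (ℓ+1) = - at' (s+1) (k - s - 1) ℓ := by
  unfold at'
  rw [tri, pow_succ]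
  have : k - ((ℓ : ℤ) * (ℓ + 1) / 2 + ℓ + 1) - ((ℓ + 1 : ℕ) : ℤ) * s =
    k - s - 1 - (ℓ : ℤ) * (ℓ + 1) / 2 - ℓ * ((s + 1 : ℕ) : ℤ) := by push_cast; ring
  rw [this]; ring

lemma at_rec (s : ℕ) (k : ℤ) : ∑' ℓ, at' s k ℓ =
    (partitionCountInt k : ℤ) - ∑' ℓ, at' (s+1) (k - s - 1) ℓ := by
  rw [(at_summable s k).tsum_eq_zero_add]
  simp_rw [at_succ, tsum_neg]
  simp [at', sub_eq_add_neg]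

lemma alpha_eq (s k : ℕ) : alphaBip s k = ∑' ℓ, at' s k ℓ := rfl

lemma pci (k : ℕ) : partitionCountInt (k : ℤ) = partitionCount k := by
  simp [partitionCountInt]

lemma alpha_small (s k : ℕ) (h : k < s + 1) : alphaBip s k = partitionCount k := by
  rw [alpha_eq, at_rec, pci]
  have : ∀ ℓ, at' (s+1) ((k:ℤ) - s - 1) ℓ = 0 := fun ℓ => at_zero _ _ _ (by omega)
  simp [this]

lemma alpha_rec (s k : ℕ) : alphaBip s (s + 1 + k) = partitionCount (s + 1 + k) - alphaBip (s+1) k := by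
  rw [alpha_eq, at_rec, pci, alpha_eq]
  congr 2
  push_cast
  ring_nf

lemma T_formula (n : ℕ) : ∀ s, (Nat.card (T s n) : ℤ) =
    ∑ k ∈ Finset.range (n + 1), (cubicPartition (n - k) : ℤ) * alphaBip s k := by
  induction n using Nat.strong_induction_on with
  | _ n ih =>
    intro s
    by_cases h : n < s + 1
    · rw [T_small s n h]
      push_cast
      apply Finset.sum_congr rfl
      intro k hk
      rw [alpha_small s k (by simp at hk; omega)]
    · obtain ⟨j, rfl⟩ : ∃ j, n = j + s + 1 := ⟨n - s - 1, by omega⟩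
      have h1 := T_rec s j
      have h2 := ih j (by omega) (s+1)
      have h3 : (Nat.card (T s (j+s+1)) : ℤ) + Nat.card (T (s+1) j) =
        ∑ k ∈ Finset.range (j+s+1+1), (cubicPartition (j+s+1 - k) : ℤ) * partitionCount k := by
        exact_mod_cast h1
      rw [h2] at h3
      rw [eq_sub_of_add_eq h3]
      have e : j + s + 1 + 1 = (s + 1) + (j + 1) := by ring
      rw [e, Finset.sum_range_add _ (s+1) (j+1), Finset.sum_range_add _ (s+1) (j+1), add_sub_assoc, ← Finset.sum_sub_distrib]
      congr 1
      · apply Finset.sum_congr rfl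
        intro k hk
        rw [alpha_small s k (by simp at hk; omega)]
      · apply Finset.sum_congr rfl
        intro k hk
        rw [alpha_rec, show j + s + 1 - (s + 1 + k) = j - k by omega]
        ring


/-! The bijection between pairs and triples -/

def cc (a b : ℕ → ℕ) (i : ℕ) : ℕ := min (a i) (b i) - max (a (i+1)) (b (i+1))
def ee (a b : ℕ → ℕ) (i : ℕ) : ℕ := cc a b (2 * i + 1)
def uu (a b : ℕ → ℕ) (i : ℕ) : ℕ := (a i - b i) + cc a b (2 * i)
def vv (a b : ℕ → ℕ) (i : ℕ) : ℕ := (b i - a i) + cc a b (2 * i)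

def ZB (K : ℕ) (f : ℕ → ℕ) : Prop := ∀ i, K ≤ i → f i = 0

lemma cc_ZB {K : ℕ} {a b : ℕ → ℕ} (ha : ZB K a) : ZB K (cc a b) := by
  intro i hi; simp [cc, ha i hi]
lemma ee_ZB {K : ℕ} {a b : ℕ → ℕ} (ha : ZB K a) : ZB K (ee a b) := by
  intro i hi; exact cc_ZB ha _ (by omega)
lemma uu_ZB {K : ℕ} {a b : ℕ → ℕ} (ha : ZB K a) : ZB K (uu a b) := by
  intro i hi; simp [uu, ha i hi, cc_ZB (b := b) ha (2 * i) (by omega)]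
lemma vv_ZB {K : ℕ} {a b : ℕ → ℕ} (ha : ZB K a) (hb : ZB K b) : ZB K (vv a b) := by
  intro i hi; simp [vv, hb i hi, cc_ZB (b := b) ha (2 * i) (by omega)]

lemma ZB_fin {K : ℕ} {f : ℕ → ℕ} (h : ZB K f) : (Function.support f).Finite := by
  apply (Set.finite_Iio K).subset
  intro i hi
  by_contra hc
  exact hi (h i (by simpa using hc))

lemma ex_ZB (f : ℕ →₀ ℕ) : ∃ K, ZB K f := by
  refine ⟨f.support.sup id + 1, fun i hi => ?_⟩
  by_contra hc
  have := Finset.le_sup (f := id) (Finsupp.mem_support_iff.mpr hc)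
  simp only [id] at this
  omega

lemma ZB_mono {K L : ℕ} {f : ℕ → ℕ} (h : ZB K f) (hL : K ≤ L) : ZB L f :=
  fun i hi => h i (hL.trans hi)

lemma sub_of_ZB {K : ℕ} {f : ℕ →₀ ℕ} (h : ZB K f) : f.support ⊆ Finset.range K := by
  intro i hi
  by_contra hc
  exact (Finsupp.mem_support_iff.mp hi) (h i (by simpa using hc))

lemma fsum {K : ℕ} {f : ℕ →₀ ℕ} (h : ZB K f) : (f.sum fun _ x => x) = ∑ i ∈ Finset.range K, f i :=
  Finsupp.sum_of_support_subset _ (sub_of_ZB h) _ (by simp)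

lemma mcard {K : ℕ} {f : ℕ →₀ ℕ} (h : ZB K f) :
    (Finsupp.toMultiset f).card = ∑ i ∈ Finset.range K, f i := by
  rw [Finsupp.card_toMultiset]; exact fsum h

lemma msum {K : ℕ} {f : ℕ →₀ ℕ} (h : ZB K f) :
    (Finsupp.toMultiset f).sum = ∑ i ∈ Finset.range K, f i * i := by
  rw [Finsupp.toMultiset_apply, Finsupp.sum_of_support_subset _ (sub_of_ZB h) _ (by simp),
    Multiset.sum_sum]
  apply Finset.sum_congr rfl
  intro i _
  rw [Multiset.sum_nsmul]; simp

lemma main_sum (a b : ℕ → ℕ) (h : SteadilyDecreasing a b) (K : ℕ) :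
    ∑ i ∈ Finset.range K, ((i+1) * cc a b i + i * (a i - b i) + (i+1) * (b i - a i))
      + K * max (a K) (b K) = ∑ i ∈ Finset.range K, b i := by
  induction K with
  | zero => simp
  | succ K ih =>
    rw [Finset.sum_range_succ, Finset.sum_range_succ, ← ih]
    have hK := h K
    have e1 : min (a K) (b K) = cc a b K + max (a (K+1)) (b (K+1)) := by
      simp only [cc]; omega
    have e2 : max (a K) (b K) = min (a K) (b K) + (a K - b K) + (b K - a K) := by omega
    have e3 : b K = min (a K) (b K) + (b K - a K) := by omega
    have e4 : (K + 1) * max (a (K+1)) (b (K+1)) + (K+1) * cc a b K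
      = (K+1) * min (a K) (b K) := by rw [e1]; ring
    rw [e2]
    generalize min (a K) (b K) = x at *
    generalize a K - b K = d at *
    generalize b K - a K = d' at *
    rw [e3]
    linarith [e4]

lemma sum_even_odd (f : ℕ → ℕ) (K : ℕ) :
    ∑ i ∈ Finset.range (2 * K), f i = ∑ i ∈ Finset.range K, (f (2*i) + f (2*i+1)) := by
  induction K with
  | zero => simp
  | succ K ih =>
    rw [show 2 * (K+1) = 2 * K + 1 + 1 by ring, Finset.sum_range_succ, Finset.sum_range_succ,
      Finset.sum_range_succ, ih]; ring

lemma ZB_sum {K : ℕ} {f : ℕ → ℕ} (h : ZB K f) :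
    ∑ i ∈ Finset.range (2 * K), f i = ∑ i ∈ Finset.range K, f i := by
  symm
  apply Finset.sum_subset
  · intro i hi; simp at hi ⊢; omega
  · intro i _ hi; exact h i (by simpa using hi)

lemma weight (a b : ℕ → ℕ) (h : SteadilyDecreasing a b) (K : ℕ) (ha : ZB K a) (hb : ZB K b) :
    2 * (∑ i ∈ Finset.range K, ee a b i * i + ∑ i ∈ Finset.range K, ee a b i)
      + ∑ i ∈ Finset.range K, uu a b i * i
      + (∑ i ∈ Finset.range K, vv a b i * i + ∑ i ∈ Finset.range K, vv a b i)
    = ∑ i ∈ Finset.range K, b i := by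
  rw [← main_sum a b h K, ha K le_rfl, hb K le_rfl]
  have hz : ZB K (fun i => (i+1) * cc a b i) := by
    intro i hi; simp [cc_ZB (b := b) ha i hi]
  have h1 := (ZB_sum hz).symm.trans (sum_even_odd _ K)
  simp only [Finset.sum_add_distrib] at h1 ⊢
  rw [h1]
  simp only [max_self, mul_zero, add_zero, ← Finset.sum_add_distrib, Finset.mul_sum]
  apply Finset.sum_congr rfl
  intro i _
  simp only [ee, uu, vv]
  ring

lemma diff (a b : ℕ → ℕ) (K : ℕ) :
    ∑ i ∈ Finset.range K, uu a b i + ∑ i ∈ Finset.range K, b i =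
    ∑ i ∈ Finset.range K, vv a b i + ∑ i ∈ Finset.range K, a i := by
  simp only [← Finset.sum_add_distrib]
  apply Finset.sum_congr rfl
  intro i _
  simp only [uu, vv]
  omega

lemma inj_aux (a b a' b' : ℕ → ℕ) (h : SteadilyDecreasing a b) (h' : SteadilyDecreasing a' b')
    (K : ℕ) (ha : ZB K a) (hb : ZB K b) (ha' : ZB K a') (hb' : ZB K b')
    (he : ∀ i, ee a b i = ee a' b' i) (hu : ∀ i, uu a b i = uu a' b' i)
    (hv : ∀ i, vv a b i = vv a' b' i) : ∀ i, a i = a' i ∧ b i = b' i := by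
  have hc : ∀ i, cc a b i = cc a' b' i := by
    intro i
    rcases Nat.even_or_odd' i with ⟨k, rfl | rfl⟩
    · have h1 := hu k
      have h2 := hv k
      simp only [uu, vv] at h1 h2
      omega
    · exact he k
  have key : ∀ k i, K ≤ i + k → a i = a' i ∧ b i = b' i := by
    intro k
    induction k with
    | zero => intro i hi; rw [ha i hi, hb i hi, ha' i hi, hb' i hi]; simp
    | succ k ih =>
      intro i hi
      obtain ⟨h1, h2⟩ := ih (i+1) (by omega)
      have h3 := hc i
      have h4 := hu i
      have h5 := hv i
      have h6 := hc (2 * i)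
      have h7 := h i
      have h8 := h' i
      simp only [uu, vv, h6] at h4 h5
      simp only [cc] at h3
      omega
  exact fun i => key K i (by omega)

lemma surj_aux (e u v : ℕ → ℕ) (K : ℕ) (he : ZB K e) (hu : ZB K u) (hv : ZB K v) :
    ∃ a b : ℕ → ℕ, SteadilyDecreasing a b ∧ ZB (2*K) a ∧ ZB (2*K) b ∧ ee a b = e ∧ uu a b = u ∧
      vv a b = v := by
  let c : ℕ → ℕ := fun i => if i % 2 = 0 then min (u (i/2)) (v (i/2)) else e (i/2)
  let M : ℕ → ℕ := fun i => ∑ j ∈ Finset.Ico i (2*K), (c j + (u j - v j) + (v j - u j))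
  have hcz : ∀ i, 2 * K ≤ i → c i = 0 := by
    intro i hi
    simp only [c]
    rw [he _ (by omega), hu _ (by omega)]; simp
  have hM : ∀ i, M i = c i + (u i - v i) + (v i - u i) + M (i+1) := by
    intro i
    by_cases hi : i < 2 * K
    · simp only [M]; rw [Finset.sum_eq_sum_Ico_succ_bot hi]
    · simp only [M]
      rw [Finset.Ico_eq_empty (by omega), Finset.Ico_eq_empty (by omega), hcz i (by omega),
        hu i (by omega), hv i (by omega)]; simp
  have hMz : ∀ i, 2 * K ≤ i → M i = 0 := by
    intro i hi; simp only [M]; rw [Finset.Ico_eq_empty (by omega)]; simp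
  let a : ℕ → ℕ := fun i => c i + M (i+1) + (u i - v i)
  let b : ℕ → ℕ := fun i => c i + M (i+1) + (v i - u i)
  have hmax : ∀ i, max (a i) (b i) = M i := by
    intro i; rw [hM i]; simp only [a, b]; omega
  have hmin : ∀ i, min (a i) (b i) = c i + M (i+1) := by
    intro i; simp only [a, b]; omega
  have hcc : ∀ i, cc a b i = c i := by
    intro i; simp only [cc]; rw [hmax, hmin]; omega
  have hc0 : ∀ i, c (2 * i) = min (u i) (v i) := by intro i; simp [c]
  have hc1 : ∀ i, c (2 * i + 1) = e i := by
    intro i; simp only [c]; rw [if_neg (by omega), show (2 * i + 1) / 2 = i by omega]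
  refine ⟨a, b, ?_, ?_, ?_, ?_, ?_, ?_⟩
  · intro i; rw [hmax, hmin]; omega
  · intro i hi; have := hmax i; rw [hMz i hi] at this; omega
  · intro i hi; have := hmax i; rw [hMz i hi] at this; omega
  · funext i; rw [ee, hcc, hc1]
  · funext i; rw [uu, hcc, hc0]; simp only [a, b]; omega
  · funext i; rw [vv, hcc, hc0]; simp only [a, b]; omega

/-- total conversion of a function to a finitely supported function -/
noncomputable def mk (f : ℕ → ℕ) : ℕ →₀ ℕ :=
  open Classical in if h : (Function.support f).Finite then Finsupp.ofSupportFinite f h else 0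

lemma mk_coe {K : ℕ} {f : ℕ → ℕ} (h : ZB K f) : ⇑(mk f) = f := by
  rw [mk, dif_pos (ZB_fin h)]; rfl

lemma ex_ZB2 (f g : ℕ →₀ ℕ) : ∃ K, ZB K f ∧ ZB K g := by
  obtain ⟨K, h⟩ := ex_ZB f
  obtain ⟨L, h'⟩ := ex_ZB g
  exact ⟨max K L, ZB_mono h (le_max_left _ _), ZB_mono h' (le_max_right _ _)⟩

noncomputable def Phi (p : (ℕ →₀ ℕ) × (ℕ →₀ ℕ)) : MS × MS × MS :=
  (Finsupp.toMultiset (mk (ee p.1 p.2)), Finsupp.toMultiset (mk (uu p.1 p.2)),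
    Finsupp.toMultiset (mk (vv p.1 p.2)))

lemma Phi_spec (p : (ℕ →₀ ℕ) × (ℕ →₀ ℕ)) (h : SteadilyDecreasing p.1 p.2) :
    2 * ((Phi p).1.sum + (Phi p).1.card) + (Phi p).2.1.sum + ((Phi p).2.2.sum + (Phi p).2.2.card)
      = (p.2.sum fun _ x => x) ∧
    (Phi p).2.1.card + (p.2.sum fun _ x => x) = (Phi p).2.2.card + (p.1.sum fun _ x => x) := by
  obtain ⟨a, b⟩ := p
  simp only at h
  obtain ⟨K, ha, hb⟩ := ex_ZB2 a b
  have e1 := mk_coe (ee_ZB (b := b) ha)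
  have e2 := mk_coe (uu_ZB (b := b) ha)
  have e3 := mk_coe (vv_ZB ha hb)
  have z1 : ZB K (mk (ee a b)) := by rw [e1]; exact ee_ZB ha
  have z2 : ZB K (mk (uu a b)) := by rw [e2]; exact uu_ZB ha
  have z3 : ZB K (mk (vv a b)) := by rw [e3]; exact vv_ZB ha hb
  simp only [Phi]
  rw [mcard z1, mcard z2, mcard z3, msum z1, msum z2, msum z3, fsum ha, fsum hb, e1, e2, e3]
  exact ⟨weight a b h K ha hb, diff a b K⟩

lemma card_pi (s n : ℕ) : bipartitePi (n + s) n = Nat.card (T s n) := by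
  refine Nat.card_eq_of_bijective (fun p => (⟨Phi p.1, ?_⟩ : T s n)) ⟨?_, ?_⟩
  · obtain ⟨p, _, _, h, h1, h2⟩ := p
    have := Phi_spec p h
    rw [h1, h2] at this
    exact ⟨by have := this.2; simp only; omega, this.1⟩
  · rintro ⟨⟨a, b⟩, _, _, h, h1, h2⟩ ⟨⟨a', b'⟩, _, _, h', h1', h2'⟩ hh
    have hh := congrArg Subtype.val hh
    obtain ⟨K1, ha, hb⟩ := ex_ZB2 a b
    obtain ⟨K2, ha', hb'⟩ := ex_ZB2 a' b'
    have l1 : K1 ≤ max K1 K2 := le_max_left _ _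
    have l2 : K2 ≤ max K1 K2 := le_max_right _ _
    generalize max K1 K2 = K at l1 l2
    replace ha := ZB_mono ha l1
    replace hb := ZB_mono hb l1
    replace ha' := ZB_mono ha' l2
    replace hb' := ZB_mono hb' l2
    have tinj : Function.Injective (Finsupp.toMultiset (α := ℕ)) :=
      Multiset.toFinsupp.symm.injective
    simp only [Phi, Prod.mk.injEq] at hh
    obtain ⟨q1, q2, q3⟩ := hh
    have q1 := congrArg (fun f : ℕ →₀ ℕ => (f : ℕ → ℕ)) (tinj q1)
    have q2 := congrArg (fun f : ℕ →₀ ℕ => (f : ℕ → ℕ)) (tinj q2)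
    have q3 := congrArg (fun f : ℕ →₀ ℕ => (f : ℕ → ℕ)) (tinj q3)
    rw [mk_coe (ee_ZB ha), mk_coe (ee_ZB ha')] at q1
    rw [mk_coe (uu_ZB ha), mk_coe (uu_ZB ha')] at q2
    rw [mk_coe (vv_ZB ha hb), mk_coe (vv_ZB ha' hb')] at q3
    have := inj_aux a b a' b' h h' K ha hb ha' hb' (congrFun q1) (congrFun q2) (congrFun q3)
    apply Subtype.ext
    simp only [Prod.mk.injEq]
    exact ⟨Finsupp.ext fun i => (this i).1, Finsupp.ext fun i => (this i).2⟩
  · rintro ⟨⟨e, u, v⟩, h1, h2⟩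
    obtain ⟨K1, he, hu⟩ := ex_ZB2 (Multiset.toFinsupp e) (Multiset.toFinsupp u)
    obtain ⟨K2, hv⟩ := ex_ZB (Multiset.toFinsupp v)
    obtain ⟨a, b, hab, ha, hb, q1, q2, q3⟩ := surj_aux _ _ _ (max K1 K2)
      (ZB_mono he (le_max_left _ _)) (ZB_mono hu (le_max_left _ _)) (ZB_mono hv (le_max_right _ _))
    have ea := mk_coe ha
    have eb := mk_coe hb
    have mkc : ∀ f : ℕ →₀ ℕ, mk f = f := by
      intro f
      obtain ⟨K, h⟩ := ex_ZB f
      exact DFunLike.coe_injective (mk_coe h)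
    have hP : Phi (mk a, mk b) = (e, u, v) := by
      simp only [Phi, ea, eb, q1, q2, q3, mkc, Multiset.toFinsupp_toMultiset]
    have hs : SteadilyDecreasing (mk a) (mk b) := by rw [ea, eb]; exact hab
    have sp := Phi_spec (mk a, mk b) hs
    rw [hP] at sp
    simp only at sp h1 h2
    refine ⟨⟨(mk a, mk b), ?_, ?_, hs, ?_, ?_⟩, Subtype.ext hP⟩
    · intro i; have := hs i; simp only; omega
    · intro i; have := hs i; simp only; omega
    · simp only; omega
    · simp only; omega

end BipAux


/-- for `m ≥ n ≥ 0`, `π(m,n) = Σ_{0 ≤ k ≤ n} c(n-k) · α(m-n, k)`. -/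
theorem bipartitePi_eq_sum_of_le (m n : ℕ) (h : n ≤ m) :
    (bipartitePi m n : ℤ) =
      ∑ k ∈ Finset.range (n + 1), (cubicPartition (n - k) : ℤ) * alphaBip (m - n) k := by

  obtain ⟨s, rfl⟩ := Nat.exists_eq_add_of_le h
  rw [BipAux.card_pi, BipAux.T_formula, Nat.add_sub_cancel_left]
end
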